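/- Assume Conditions (C). There exists a constant A > 0 such that for any pair of sequences (m, y) verifying Conditions (C2): P( sup_{0 ≤ i ≤ j ≤ m} | Σ_{k=i}^{j} w_{v(k)} − E[Σ_{k=i}^{j} w_{v(k)}] | ≥ y ) ≤ A·exp(−y²/(A(y·n^{1/3} + m))). -/

import Mathlib

open MeasureTheory Filter Asymptotics
open scoped Classical ENNReal Topology

noncomputable section

/-- `ℓ_n`: the total weight. -/
def ell (w : ∀ n : ℕ, Fin n → ℝ) (n : ℕ) : ℝ := ∑ i, w n i

/-- Conditions (C) on the triangular array of weights, relative to the law `μ` of the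
limiting random variable `W`. -/
structure CondC (w : ∀ n : ℕ, Fin n → ℝ) (μ : Measure ℝ) : Prop where
  isProb : IsProbabilityMeasure μ
  pos : ∀ᵐ x ∂μ, 0 < x
  w_pos : ∀ n, ∀ i : Fin n, 0 < w n i
  w_anti : ∀ n, ∀ i j : Fin n, i ≤ j → w n j ≤ w n i
  int3 : Integrable (fun x => x ^ 3) μ
  moment_eq : ∫ x, x ^ 2 ∂μ = ∫ x, x ∂μ
  weak : ∀ g : BoundedContinuousFunction ℝ ℝ,
    Tendsto (fun n : ℕ => (∑ i : Fin n, g (w n i)) / (n : ℝ)) atTop (𝓝 (∫ x, g x ∂μ))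
  ell_asymp : (fun n : ℕ => ell w n - (∫ x, x ∂μ) * (n : ℝ)) =o[atTop]
      fun n : ℕ => (n : ℝ) ^ ((2 : ℝ) / 3)
  sq_asymp : (fun n : ℕ => (∑ i : Fin n, (w n i) ^ 2) - (∫ x, x ^ 2 ∂μ) * (n : ℝ)) =o[atTop]
      fun n : ℕ => (n : ℝ) ^ ((2 : ℝ) / 3)
  cube_asymp : (fun n : ℕ => (∑ i : Fin n, (w n i) ^ 3) - (∫ x, x ^ 3 ∂μ) * (n : ℝ)) =o[atTop]
      fun _ : ℕ => (1 : ℝ)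
  max_asymp : (fun n : ℕ => ⨆ i : Fin n, w n i) =o[atTop] fun n : ℕ => (n : ℝ) ^ ((1 : ℝ) / 3)

/-- The constant `C = E[W³]/E[W]`. -/
def Cconst (μ : Measure ℝ) : ℝ := (∫ x, x ^ 3 ∂μ) / (∫ x, x ∂μ)

/-- The critical percolation parameter `p_f = (ℓ_n^{1/3} + f_n)/ℓ_n^{4/3}`. -/
def pf (w : ∀ n : ℕ, Fin n → ℝ) (f : ℕ → ℝ) (n : ℕ) : ℝ :=
  (ell w n ^ ((1 : ℝ) / 3) + f n) / ell w n ^ ((4 : ℝ) / 3)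

/-- A Bernoulli-type measure on `Bool` with parameter `p`. -/
def bern (p : ℝ) : Measure Bool :=
  ENNReal.ofReal (1 - p) • Measure.dirac false + ENNReal.ofReal p • Measure.dirac true

/-- The law of the independent edge indicators of the rank-1 inhomogeneous random graph
`G(W,p)`: the indicator attached to the (ordered) pair `(i,j)` is Bernoulli with success
probability `1 - exp (- w i * w j * p)`, all independent. -/
def graphMeasure (n : ℕ) (wn : Fin n → ℝ) (p : ℝ) : Measure (Fin n → Fin n → Bool) :=
  Measure.pi fun i => Measure.pi fun j => bern (1 - Real.exp (-(wn i * wn j * p)))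

/-- The simple graph built from a sample of edge indicators: `i ~ j` iff `i ≠ j` and the
indicator of the pair `(min i j, max i j)` is `true`. -/
def graphOf {n : ℕ} (ω : Fin n → Fin n → Bool) : SimpleGraph (Fin n) :=
  SimpleGraph.fromRel fun i j => ω (min i j) (max i j) = true

/-- The size (number of vertices) of a connected component. -/
def csize {n : ℕ} (G : SimpleGraph (Fin n)) (c : G.ConnectedComponent) : ℕ :=
  Nat.card {v : Fin n // G.connectedComponentMk v = c}

/-- The weight of a connected component: sum of the weights of its vertices. -/
def cweight {n : ℕ} (wn : Fin n → ℝ) (G : SimpleGraph (Fin n)) (c : G.ConnectedComponent) : ℝ :=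
  ∑ v : Fin n, if G.connectedComponentMk v = c then wn v else 0

/-- The number of edges of a connected component. -/
def cedges {n : ℕ} (G : SimpleGraph (Fin n)) (c : G.ConnectedComponent) : ℕ :=
  Nat.card {e : Sym2 (Fin n) // e ∈ G.edgeSet ∧ ∀ v ∈ e, G.connectedComponentMk v = c}

/-- The surplus (excess) of a connected component: edges − vertices + 1. -/
def csurplus {n : ℕ} (G : SimpleGraph (Fin n)) (c : G.ConnectedComponent) : ℤ :=
  (cedges G c : ℤ) - (csize G c : ℤ) + 1

/-- `c` is a largest connected component. -/
def isLargest {n : ℕ} (G : SimpleGraph (Fin n)) (c : G.ConnectedComponent) : Prop :=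
  ∀ c', csize G c' ≤ csize G c

/-- The finset of connected components of a graph on `Fin n`. -/
def comps {n : ℕ} (G : SimpleGraph (Fin n)) : Finset G.ConnectedComponent :=
  Finset.univ.image G.connectedComponentMk

/-- The law of the size-biased random order without replacement `(v(1),…,v(n))`, seen as a
measure on functions `Fin n → Fin n` (supported on permutations `σ`, with
`P(v = σ) = ∏_i w (σ i) / (ℓ_n − ∑_{k<i} w (σ k))`). -/
def sbMeasure (n : ℕ) (wn : Fin n → ℝ) : Measure (Fin n → Fin n) :=
  Measure.sum fun σ : Equiv.Perm (Fin n) =>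
    ENNReal.ofReal (∏ i : Fin n,
        wn (σ i) / ((∑ k, wn k) - ∑ k ∈ Finset.univ.filter fun k => k < i, wn (σ k))) •
      Measure.dirac ⇑σ

/-- The joint law of (edge indicators of `G(W,p)`, size-biased order), the two being
independent. -/
def expMeasure' (n : ℕ) (wn : Fin n → ℝ) (p : ℝ) :
    Measure ((Fin n → Fin n → Bool) × (Fin n → Fin n)) :=
  Measure.sum fun σ : Equiv.Perm (Fin n) =>
    ENNReal.ofReal (∏ i : Fin n,
        wn (σ i) / ((∑ k, wn k) - ∑ k ∈ Finset.univ.filter fun k => k < i, wn (σ k))) •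
      (graphMeasure n wn p).map fun g => (g, ⇑σ)

/-- `sbW wn vord k` is `w_{v(k)}` (1-based), with the conventions `w_{v(0)} = 0` and
`w_{v(k)} = 0` for `k > n`. -/
def sbW {n : ℕ} (wn : Fin n → ℝ) (vord : Fin n → Fin n) (k : ℕ) : ℝ :=
  if h : k - 1 < n then (if k = 0 then 0 else wn (vord ⟨k - 1, h⟩)) else 0

/-- The (0-based) first position, in the order `vord`, of a vertex of the component `c`;
this governs the order in which components are discovered by the breadth-first walk. -/
def firstIdx {n : ℕ} (G : SimpleGraph (Fin n)) (vord : Fin n → Fin n)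
    (c : G.ConnectedComponent) : ℕ :=
  sInf {i : ℕ | ∃ h : i < n, G.connectedComponentMk (vord ⟨i, h⟩) = c}

/-- The number of vertices explored strictly before the exploration of the component `c`
starts: components are explored in the order of their first appearance in `vord`, and the
exploration of `c` occupies the steps `startT c + 1, …, startT c + csize c`. -/
def startT {n : ℕ} (G : SimpleGraph (Fin n)) (vord : Fin n → Fin n)
    (c : G.ConnectedComponent) : ℕ :=
  ∑ v : Fin n, if firstIdx G vord (G.connectedComponentMk v) < firstIdx G vord c then 1 else 0

/-- The state (explored vertices, queue of discovered-but-unexplored vertices) of the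
breadth-first walk after `i` steps; roots are chosen as the first undiscovered vertex in the
order `vord`, and children are queued in the order `vord`. -/
def bfwQueue {n : ℕ} (G : SimpleGraph (Fin n)) (vord : Fin n → Fin n) :
    ℕ → Finset (Fin n) × List (Fin n)
  | 0 => (∅, [])
  | i + 1 =>
    let s := bfwQueue G vord i
    let q : List (Fin n) :=
      if s.2.isEmpty then ((List.ofFn vord).filter fun v => decide (v ∉ s.1)).take 1 else s.2
    match q with
    | [] => (s.1, [])
    | v :: rest =>
      (insert v s.1,
        rest ++ (List.ofFn vord).filter fun u => decide (G.Adj v u ∧ u ∉ s.1 ∧ u ∉ q))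

/-- The reflected exploration process `L` of the breadth-first walk:
`L_0 = 1`, `L_{i+1} = max (L_i + c(i+1) - 1) 1`. -/
def Lproc {n : ℕ} (G : SimpleGraph (Fin n)) (vord : Fin n → Fin n) (i : ℕ) : ℕ :=
  max (bfwQueue G vord i).2.length 1

/-- `discNbrs G vord i` is the number of neighbours of `v(i+1)` (0-based: `vord i`) outside
`{v(1),…,v(i+1)}`, i.e. the increment `X⁰_{i+1} + 1` of the process `L⁰`. -/
def discNbrs {n : ℕ} (G : SimpleGraph (Fin n)) (vord : Fin n → Fin n) (i : ℕ) : ℕ :=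
  Nat.card {j : Fin n // (∃ h : i < n, G.Adj (vord ⟨i, h⟩) j) ∧
    ∀ k : ℕ, ∀ hk : k < n, k ≤ i → vord ⟨k, hk⟩ ≠ j}

/-- The process `L⁰`: `L⁰_0 = 1`, `L⁰_{i+1} = L⁰_i + X⁰_{i+1}` where
`X⁰_{i+1} = ∑_{j ∉ {v(1),…,v(i+1)}} Y(v(i+1), j) − 1`. -/
def L0 {n : ℕ} (G : SimpleGraph (Fin n)) (vord : Fin n → Fin n) (m : ℕ) : ℤ :=
  1 - (m : ℤ) + ∑ i ∈ Finset.range m, (discNbrs G vord i : ℤ)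

/-- The deterministic-drift process `L̃^h`, defined by
`L̃^h_m + m − 1 = ∑_{i=1}^m ∑_{k > i+h} (1 − exp (−w_{v(i)} w_{v(k)} p))`,
the inner sum being over positions `k ≤ n` in the size-biased order. -/
def Ltilde {n : ℕ} (wn : Fin n → ℝ) (p : ℝ) (vord : Fin n → Fin n) (h m : ℕ) : ℝ :=
  1 - (m : ℝ) + ∑ i ∈ Finset.range m,
    if hi : i < n then
      ∑ k : Fin n, if i + h < (k : ℕ) then
        1 - Real.exp (-(wn (vord ⟨i, hi⟩) * wn (vord k) * p)) else 0
    else 0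

/-- The law of the independent exponential clocks `(T_k)_{k ≤ n}`, `T_k` of rate `w_k / ℓ_n`. -/
def clocksMeasure (n : ℕ) (wn : Fin n → ℝ) : Measure (Fin n → ℝ) :=
  Measure.pi fun k => ProbabilityTheory.expMeasure (wn k / ∑ i, wn i)

/-- `N(x)`: the number of clocks that have rung by time `x`. -/
def Nclock {n : ℕ} (x : ℝ) (ω : Fin n → ℝ) : ℕ :=
  ∑ k : Fin n, if ω k ≤ x then 1 else 0

/-- `X(x)`: the total weight of the clocks that have rung by time `x`. -/
def Xclock {n : ℕ} (wn : Fin n → ℝ) (x : ℝ) (ω : Fin n → ℝ) : ℝ :=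
  ∑ k : Fin n, if ω k ≤ x then wn k else 0

/-- Conditions (C2) on a pair of sequences `(a, b)`, relative to the constant `Ā`. -/
structure Cond2 (w : ∀ n : ℕ, Fin n → ℝ) (Abar : ℝ) (a b : ℕ → ℝ) : Prop where
  exp_lt : ∀ᶠ n : ℕ in atTop,
    Real.exp (-(b n) ^ 2 / (Abar * (b n * (n : ℝ) ^ ((1 : ℝ) / 3) + a n))) < 1 / 4
  a_top : Tendsto a atTop atTop
  b_top : Tendsto b atTop atTop
  a_lito : a =o[atTop] fun n : ℕ => (n : ℝ)
  b_bigO : b =O[atTop] a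
  a_bigO : a =O[atTop] fun n => b n * ell w n ^ ((1 : ℝ) / 3)
  a_sq_bigO : (fun n => a n ^ 2) =O[atTop] fun n => b n * ell w n

/-- Conditions (C3) on a quadruple of sequences `(a, b, c, d)`. -/
structure Cond3 (w : ∀ n : ℕ, Fin n → ℝ) (Abar : ℝ) (a b c d : ℕ → ℝ) : Prop where
  sum_lito : (fun n => a n + c n) =o[atTop] fun n : ℕ => (n : ℝ)
  diff_top : Tendsto (fun n => a n - b n) atTop atTop
  d_bigO : d =O[atTop] fun n => a n - b n
  c2 : Cond2 w Abar (fun n => Real.sqrt ((a n - b n) * (a n + c n))) d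

/-- The list of component sizes, sorted in decreasing order. -/
def sizesList {n : ℕ} (G : SimpleGraph (Fin n)) : List ℕ :=
  (((comps G).val.map fun c => csize G c).sort (· ≤ ·)).reverse

/-- `kthSize G k` is the size of the `(k+1)`-st largest connected component of `G`
(`0` if there is no such component). -/
def kthSize {n : ℕ} (G : SimpleGraph (Fin n)) (k : ℕ) : ℕ := (sizesList G).getD k 0

end

set_option linter.unusedSectionVars false
namespace SB
noncomputable section
variable {α : Type} [Fintype α]

/-- total weight of a finset -/
def W (w : α → ℝ) (R : Finset α) : ℝ := ∑ x ∈ R, w x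

/-- expectation over `k` size-biased picks without replacement from `R` -/
def Ex (w : α → ℝ) : ℕ → Finset α → (List α → ℝ) → ℝ
  | 0, _, f => f []
  | k + 1, R, f => ∑ x ∈ R, w x / W w R * Ex w k (R.erase x) (fun l => f (x :: l))

def H (w : α → ℝ) (lam : ℝ) (R : Finset α) (k : ℕ) : Prop :=
  ∀ T ⊆ R, T.card ≤ k → lam ≤ W w (R \ T)

variable {w : α → ℝ} {lam : ℝ}

lemma H.le {R : Finset α} {k : ℕ} (h : H w lam R k) : lam ≤ W w R := by
  simpa using h ∅ (by simp) (by simp)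

lemma H.mono {R : Finset α} {k j : ℕ} (h : H w lam R k) (hj : j ≤ k) : H w lam R j :=
  fun T hT hc => h T hT (hc.trans hj)

lemma H.erase {R : Finset α} {k : ℕ} (h : H w lam R (k + 1)) {x : α} (hx : x ∈ R) :
    H w lam (R.erase x) k := by
  intro T hT hc
  have h1 : (R.erase x) \ T = R \ (insert x T) := by
    ext z; simp; tauto
  rw [h1]
  refine h _ ?_ ?_
  · intro z hz
    rcases Finset.mem_insert.1 hz with rfl | hz
    · exact hx
    · exact Finset.mem_of_mem_erase (hT hz)
  · exact (Finset.card_insert_le _ _).trans (by omega)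

lemma sum_p {R : Finset α} (h : 0 < W w R) : ∑ x ∈ R, w x / W w R = 1 := by
  rw [← Finset.sum_div]; exact div_self h.ne'

lemma p_nonneg (hw : ∀ x, 0 < w x) (R : Finset α) (x : α) : 0 ≤ w x / W w R :=
  div_nonneg (hw x).le (Finset.sum_nonneg fun i _ => (hw i).le)

lemma Ex_add (k : ℕ) (R : Finset α) (f g : List α → ℝ) :
    Ex w k R (fun l => f l + g l) = Ex w k R f + Ex w k R g := by
  induction k generalizing R f g with
  | zero => rfl
  | succ k ih =>
    simp only [Ex, ih, mul_add, Finset.sum_add_distrib]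

lemma Ex_mul (k : ℕ) (R : Finset α) (c : ℝ) (f : List α → ℝ) :
    Ex w k R (fun l => c * f l) = c * Ex w k R f := by
  induction k generalizing R f with
  | zero => rfl
  | succ k ih =>
    simp only [Ex, ih, Finset.mul_sum]
    exact Finset.sum_congr rfl fun x _ => by ring

lemma Ex_sub (k : ℕ) (R : Finset α) (f g : List α → ℝ) :
    Ex w k R (fun l => f l - g l) = Ex w k R f - Ex w k R g := by
  have h1 := Ex_add (w := w) k R f (fun l => (-1) * g l)
  rw [Ex_mul] at h1
  have h2 : (fun l => f l - g l) = fun l => f l + (-1) * g l := by ext l; ring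
  rw [h2, h1]; ring

lemma Ex_sum {ι : Type*} (s : Finset ι) (k : ℕ) (R : Finset α) (f : ι → List α → ℝ) :
    Ex w k R (fun l => ∑ i ∈ s, f i l) = ∑ i ∈ s, Ex w k R (f i) := by
  induction s using Finset.induction_on with
  | empty =>
    have := Ex_mul (w := w) k R 0 (fun _ => 0)
    simpa using this
  | insert a s ha ih =>
    simp only [Finset.sum_insert ha, Ex_add, ih]

lemma Ex_mono (hw : ∀ x, 0 < w x) (k : ℕ) (R : Finset α) (f g : List α → ℝ)
    (h : ∀ l : List α, l.length = k → l.Nodup → (∀ x ∈ l, x ∈ R) → f l ≤ g l) :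
    Ex w k R f ≤ Ex w k R g := by
  induction k generalizing R f g with
  | zero => exact h [] rfl (by simp) (by simp)
  | succ k ih =>
    simp only [Ex]
    refine Finset.sum_le_sum fun x hx => mul_le_mul_of_nonneg_left ?_ (p_nonneg hw R x)
    refine ih _ _ _ fun l hl hn hm => h _ (by simp [hl]) ?_ ?_
    · refine List.nodup_cons.2 ⟨fun hxl => ?_, hn⟩
      exact (Finset.mem_erase.1 (hm x hxl)).1 rfl
    · intro z hz
      rcases List.mem_cons.1 hz with rfl | hz
      · exact hx
      · exact Finset.mem_of_mem_erase (hm z hz)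

lemma Ex_congr (hw : ∀ x, 0 < w x) (k : ℕ) (R : Finset α) (f g : List α → ℝ)
    (h : ∀ l : List α, l.length = k → l.Nodup → (∀ x ∈ l, x ∈ R) → f l = g l) :
    Ex w k R f = Ex w k R g :=
  le_antisymm (Ex_mono hw _ _ _ _ fun l a b c => (h l a b c).le)
    (Ex_mono hw _ _ _ _ fun l a b c => (h l a b c).ge)

lemma Ex_const (hlam : 0 < lam) (k : ℕ) (R : Finset α) (hH : H w lam R k) (c : ℝ) :
    Ex w k R (fun _ => c) = c := by
  induction k generalizing R with
  | zero => rfl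
  | succ k ih =>
    simp only [Ex]
    rw [Finset.sum_congr rfl (g := fun x => w x / W w R * c)
      (fun x hx => by rw [ih _ (hH.erase hx)]), ← Finset.sum_mul,
      sum_p (hlam.trans_le hH.le), one_mul]

lemma Ex_take (hlam : 0 < lam) (j s : ℕ) (R : Finset α) (hH : H w lam R (j + s))
    (f : List α → ℝ) : Ex w (j + s) R (fun l => f (l.take j)) = Ex w j R f := by
  induction j generalizing R f with
  | zero =>
    simp only [List.take_zero]
    exact Ex_const hlam _ _ hH _
  | succ j ih =>
    have : j + 1 + s = (j + s) + 1 := by omega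
    rw [this] at hH ⊢
    simp only [Ex, List.take_succ_cons]
    refine Finset.sum_congr rfl fun x hx => ?_
    rw [ih _ (hH.erase hx) (fun l => f (x :: l))]

/-- conditional mean of next value -/
def mu (w a : α → ℝ) (R : Finset α) : ℝ := ∑ x ∈ R, w x / W w R * a x

def F (w a : α → ℝ) (k : ℕ) (R : Finset α) : ℝ := Ex w k R (fun l => (l.map a).sum)

variable {a : α → ℝ} {κ : ℝ}

lemma F_zero (R : Finset α) : F w a 0 R = 0 := by simp [F, Ex]

lemma F_succ (hlam : 0 < lam) (k : ℕ) (R : Finset α) (hH : H w lam R (k + 1)) :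
    F w a (k + 1) R = ∑ x ∈ R, w x / W w R * (a x + F w a k (R.erase x)) := by
  simp only [F, Ex, List.map_cons, List.sum_cons]
  refine Finset.sum_congr rfl fun x hx => ?_
  rw [Ex_add, Ex_const hlam _ _ (hH.erase hx)]

lemma erase_sdiff (R : Finset α) (x : α) (l : List α) :
    (R.erase x) \ l.toFinset = R \ (x :: l).toFinset := by
  ext z; simp; tauto

lemma F_diff (hlam : 0 < lam) (k : ℕ) (R : Finset α) (hH : H w lam R (k + 1)) :
    F w a (k + 1) R - F w a k R = Ex w k R (fun l => mu w a (R \ l.toFinset)) := by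
  induction k generalizing R with
  | zero =>
    rw [F_succ hlam _ _ hH]; simp [F_zero, Ex, mu]
  | succ k ih =>
    rw [F_succ hlam _ _ hH, F_succ hlam _ _ (hH.mono (by omega)), ← Finset.sum_sub_distrib]
    simp only [Ex]
    refine Finset.sum_congr rfl fun x hx => ?_
    rw [← mul_sub]
    congr 1
    have := ih _ (hH.erase hx)
    simp only [erase_sdiff] at this
    rw [← this]; ring

lemma mu_bounds (hw : ∀ x, 0 < w x) (ha : ∀ x, 0 ≤ a x) (hlam : 0 < lam)
    (hκ : ∑ x, w x * a x ≤ κ * lam) (hκ0 : 0 ≤ κ) (R : Finset α) (hR : lam ≤ W w R) :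
    0 ≤ mu w a R ∧ mu w a R ≤ κ := by
  have h0 : 0 < W w R := hlam.trans_le hR
  constructor
  · exact Finset.sum_nonneg fun x _ => mul_nonneg (p_nonneg hw R x) (ha x)
  · have : mu w a R = (∑ x ∈ R, w x * a x) / W w R := by
      rw [mu, Finset.sum_div]; exact Finset.sum_congr rfl fun x _ => by ring
    rw [this, div_le_iff₀ h0]
    calc ∑ x ∈ R, w x * a x ≤ ∑ x, w x * a x :=
          Finset.sum_le_sum_of_subset_of_nonneg (Finset.subset_univ _)
            fun x _ _ => mul_nonneg (hw x).le (ha x)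
      _ ≤ κ * lam := hκ
      _ ≤ κ * W w R := mul_le_mul_of_nonneg_left hR hκ0

lemma H.list {R : Finset α} {k : ℕ} (h : H w lam R k) {l : List α} (hl : l.length ≤ k)
    (hm : ∀ x ∈ l, x ∈ R) : lam ≤ W w (R \ l.toFinset) :=
  h _ (fun x hx => hm x (by simpa using hx)) ((List.toFinset_card_le l).trans hl)

lemma F_diff_bounds (hw : ∀ x, 0 < w x) (ha : ∀ x, 0 ≤ a x) (hlam : 0 < lam)
    (hκ : ∑ x, w x * a x ≤ κ * lam) (hκ0 : 0 ≤ κ) (k : ℕ) (R : Finset α)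
    (hH : H w lam R (k + 1)) :
    0 ≤ F w a (k + 1) R - F w a k R ∧ F w a (k + 1) R - F w a k R ≤ κ := by
  rw [F_diff hlam k R hH]
  have hH' := hH.mono (Nat.le_succ k)
  constructor
  · have := Ex_mono hw k R (fun _ => 0) (fun l => mu w a (R \ l.toFinset)) (fun l hl hn hm =>
      (mu_bounds hw ha hlam hκ hκ0 _ (hH'.list hl.le hm)).1)
    rwa [Ex_const hlam _ _ hH'] at this
  · have := Ex_mono hw k R (fun l => mu w a (R \ l.toFinset)) (fun _ => κ) (fun l hl hn hm =>
      (mu_bounds hw ha hlam hκ hκ0 _ (hH'.list hl.le hm)).2)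
    rwa [Ex_const hlam _ _ hH'] at this

lemma F_le (hw : ∀ x, 0 < w x) (ha : ∀ x, 0 ≤ a x) (hlam : 0 < lam)
    (hκ : ∑ x, w x * a x ≤ κ * lam) (hκ0 : 0 ≤ κ) (k : ℕ) (R : Finset α)
    (hH : H w lam R k) : F w a k R ≤ k * κ := by
  induction k with
  | zero => simp [F_zero]
  | succ k ih =>
    have h1 := ih (hH.mono (by omega))
    have h2 := (F_diff_bounds hw ha hlam hκ hκ0 k R hH).2
    push_cast; linarith

lemma D_bounds (hw : ∀ x, 0 < w x) (ha : ∀ x, 0 ≤ a x) (hlam : 0 < lam)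
    (hκ : ∑ x, w x * a x ≤ κ * lam) (hκ0 : 0 ≤ κ) (k : ℕ) (R : Finset α)
    (hH : H w lam R (k + 1)) (x : α) (hx : x ∈ R) :
    -κ ≤ F w a k R - F w a k (R.erase x) ∧ F w a k R - F w a k (R.erase x) ≤ a x := by
  induction k generalizing R with
  | zero => simp [F_zero, hκ0, ha x]
  | succ k ih =>
    have hW : 0 < W w R := hlam.trans_le hH.le
    have hHx := hH.erase hx
    have hWx : 0 < W w (R.erase x) := hlam.trans_le hHx.le
    have hsplit : W w R = w x + W w (R.erase x) := by
      simp only [W]; rw [Finset.add_sum_erase _ _ hx]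
    have hf := F_diff_bounds hw ha hlam hκ hκ0 k _ hHx
    set p := w x / W w R with hp
    have hp0 : 0 ≤ p := p_nonneg hw R x
    have e1 : F w a (k + 1) R = p * (a x + F w a k (R.erase x)) +
        ∑ b ∈ R.erase x, w b / W w R * (a b + F w a k (R.erase b)) := by
      rw [F_succ hlam _ _ (hH.mono (by omega)), Finset.add_sum_erase _
        (fun b => w b / W w R * (a b + F w a k (R.erase b))) hx]
    have e2 : F w a (k + 1) (R.erase x) = p * F w a (k + 1) (R.erase x) +
        ∑ b ∈ R.erase x, w b / W w R * (a b + F w a k ((R.erase b).erase x)) := by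
      have : ∑ b ∈ R.erase x, w b / W w R * (a b + F w a k ((R.erase b).erase x))
          = (W w (R.erase x) / W w R) * F w a (k + 1) (R.erase x) := by
        rw [F_succ hlam _ _ hHx, Finset.mul_sum]
        refine Finset.sum_congr rfl fun b hb => ?_
        rw [Finset.erase_right_comm]
        field_simp
      rw [this, hp, ← add_mul, ← add_div, ← hsplit, div_self hW.ne', one_mul]
    have e3 : F w a (k + 1) R - F w a (k + 1) (R.erase x) =
        p * (a x + F w a k (R.erase x) - F w a (k + 1) (R.erase x)) +
        ∑ b ∈ R.erase x, w b / W w R * (F w a k (R.erase b) - F w a k ((R.erase b).erase x)) := by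
      have : ∑ b ∈ R.erase x, w b / W w R * (F w a k (R.erase b) - F w a k ((R.erase b).erase x))
        = ∑ b ∈ R.erase x, w b / W w R * (a b + F w a k (R.erase b)) -
          ∑ b ∈ R.erase x, w b / W w R * (a b + F w a k ((R.erase b).erase x)) := by
        rw [← Finset.sum_sub_distrib]
        exact Finset.sum_congr rfl fun b _ => by ring
      rw [this]; linarith
    have hsum : p + ∑ b ∈ R.erase x, w b / W w R = 1 := by
      rw [hp, Finset.add_sum_erase _ (fun b => w b / W w R) hx]; exact sum_p hW
    have hb : ∀ b ∈ R.erase x, -κ ≤ F w a k (R.erase b) - F w a k ((R.erase b).erase x) ∧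
        F w a k (R.erase b) - F w a k ((R.erase b).erase x) ≤ a x := by
      intro b hb
      have hbR := Finset.mem_of_mem_erase hb
      have hne := (Finset.mem_erase.1 hb).1
      exact ih _ (hH.erase hbR) (Finset.mem_erase.2 ⟨hne.symm, hx⟩)
    rw [e3]
    have l1 : ∑ b ∈ R.erase x, w b / W w R * (-κ) ≤ ∑ b ∈ R.erase x, w b / W w R *
      (F w a k (R.erase b) - F w a k ((R.erase b).erase x)) :=
      Finset.sum_le_sum fun b h => mul_le_mul_of_nonneg_left (hb b h).1 (p_nonneg hw R b)
    have l2 : ∑ b ∈ R.erase x, w b / W w R *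
      (F w a k (R.erase b) - F w a k ((R.erase b).erase x)) ≤ ∑ b ∈ R.erase x, w b / W w R * a x :=
      Finset.sum_le_sum fun b h => mul_le_mul_of_nonneg_left (hb b h).2 (p_nonneg hw R b)
    rw [← Finset.sum_mul] at l1 l2
    have m1 : p * (-κ) ≤ p * (a x + F w a k (R.erase x) - F w a (k + 1) (R.erase x)) :=
      mul_le_mul_of_nonneg_left (by linarith [ha x]) hp0
    have m2 : p * (a x + F w a k (R.erase x) - F w a (k + 1) (R.erase x)) ≤ p * a x :=
      mul_le_mul_of_nonneg_left (by linarith [ha x]) hp0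
    have hs : ∑ b ∈ R.erase x, w b / W w R = 1 - p := by linarith
    rw [hs] at l1 l2
    constructor <;> nlinarith

lemma exp_quad {u : ℝ} (hu : |u| ≤ 1) : Real.exp u ≤ 1 + u + u ^ 2 := by
  have := Real.abs_exp_sub_one_sub_id_le hu
  have := (abs_le.1 this).2
  linarith

/-- one step MGF bound -/
lemma one_step (hw : ∀ x, 0 < w x) (hlam : 0 < lam) (R : Finset α) (hR : lam ≤ W w R)
    (hκ0 : 0 ≤ κ) (ha : ∀ x, 0 ≤ a x) {B v θ : ℝ} (hB : ∀ x, a x + κ ≤ B) (hθ : |θ| * B ≤ 1)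
    (hv : 2 * (∑ x, w x * a x ^ 2) / lam + 2 * κ ^ 2 ≤ v)
    (d : α → ℝ) (hd : ∀ x ∈ R, |d x| ≤ a x + κ) (hd0 : ∑ x ∈ R, w x / W w R * d x = 0) :
    ∑ x ∈ R, w x / W w R * Real.exp (θ * d x) ≤ Real.exp (v * θ ^ 2) := by
  have hW : 0 < W w R := hlam.trans_le hR
  have h1 : ∀ x ∈ R, w x / W w R * Real.exp (θ * d x) ≤
      w x / W w R + θ * (w x / W w R * d x) + θ ^ 2 * (w x / W w R * (2 * a x ^ 2 + 2 * κ ^ 2)) := by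
    intro x hx
    have hdx := hd x hx
    have hu : |θ * d x| ≤ 1 := by
      rw [abs_mul]
      exact (mul_le_mul_of_nonneg_left (hdx.trans (hB x)) (abs_nonneg _)).trans hθ
    have h2 : (d x) ^ 2 ≤ 2 * a x ^ 2 + 2 * κ ^ 2 := by
      rw [← sq_abs]
      nlinarith [abs_nonneg (d x), sq_nonneg (a x - κ), ha x]
    have h3 := exp_quad hu
    have h4 : Real.exp (θ * d x) ≤ 1 + θ * d x + θ ^ 2 * (2 * a x ^ 2 + 2 * κ ^ 2) := by
      nlinarith [sq_nonneg θ, mul_le_mul_of_nonneg_left h2 (sq_nonneg θ)]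
    nlinarith [mul_le_mul_of_nonneg_left h4 (p_nonneg hw R x)]
  have h5 : ∑ x ∈ R, w x / W w R * (2 * a x ^ 2 + 2 * κ ^ 2) ≤ v := by
    refine le_trans ?_ hv
    have e : ∑ x ∈ R, w x / W w R * (2 * a x ^ 2 + 2 * κ ^ 2) =
        2 * (∑ x ∈ R, w x * a x ^ 2) / W w R + 2 * κ ^ 2 := by
      simp only [mul_add, Finset.sum_add_distrib, ← Finset.sum_mul, sum_p hW, one_mul]
      rw [Finset.mul_sum, Finset.sum_div]
      congr 1
      exact Finset.sum_congr rfl fun x _ => by ring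
    rw [e]
    gcongr 2 * ?_ / ?_ + _
    · exact mul_nonneg zero_le_two
        (Finset.sum_nonneg fun x _ => mul_nonneg (hw x).le (sq_nonneg _))
    · exact Finset.sum_le_sum_of_subset_of_nonneg (Finset.subset_univ _)
            fun x _ _ => mul_nonneg (hw x).le (sq_nonneg _)
  calc _ ≤ _ := Finset.sum_le_sum h1
    _ = 1 + θ ^ 2 * ∑ x ∈ R, w x / W w R * (2 * a x ^ 2 + 2 * κ ^ 2) := by
      rw [Finset.sum_add_distrib, Finset.sum_add_distrib, sum_p hW, ← Finset.mul_sum,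
        ← Finset.mul_sum, hd0]; ring
    _ ≤ 1 + θ ^ 2 * v := by gcongr
    _ ≤ Real.exp (v * θ ^ 2) := by
      have := Real.add_one_le_exp (v * θ ^ 2); linarith

/-- fixed time MGF bound -/
lemma mgf (hw : ∀ x, 0 < w x) (ha : ∀ x, 0 ≤ a x) (hlam : 0 < lam)
    (hκ : ∑ x, w x * a x ≤ κ * lam) (hκ0 : 0 ≤ κ)
    {B v θ : ℝ} (hB : ∀ x, a x + κ ≤ B) (hθ : |θ| * B ≤ 1)
    (hv : 2 * (∑ x, w x * a x ^ 2) / lam + 2 * κ ^ 2 ≤ v)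
    (k : ℕ) (R : Finset α) (hH : H w lam R k) :
    Ex w k R (fun l => Real.exp (θ * ((l.map a).sum - F w a k R))) ≤
      Real.exp (k * v * θ ^ 2) := by
  induction k generalizing R with
  | zero => simp [Ex, F_zero]
  | succ k ih =>
    have hW : 0 < W w R := hlam.trans_le hH.le
    set d : α → ℝ := fun x => a x + F w a k (R.erase x) - F w a (k + 1) R with hd
    have hd0 : ∑ x ∈ R, w x / W w R * d x = 0 := by
      simp only [hd, mul_sub, Finset.sum_sub_distrib]
      rw [← F_succ hlam _ _ hH, ← Finset.sum_mul, sum_p hW]; ring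
    have hdb : ∀ x ∈ R, |d x| ≤ a x + κ := by
      intro x hx
      have h1 := D_bounds hw ha hlam hκ hκ0 k R hH x hx
      have h2 := F_diff_bounds hw ha hlam hκ hκ0 k R hH
      rw [abs_le]; simp only [hd]
      constructor <;> linarith [ha x]
    have h1 := one_step hw hlam R hH.le hκ0 ha hB hθ hv d hdb hd0
    simp only [Ex]
    calc _ = ∑ x ∈ R, w x / W w R * (Real.exp (θ * d x) * Ex w k (R.erase x)
            (fun l => Real.exp (θ * ((l.map a).sum - F w a k (R.erase x))))) := by
          refine Finset.sum_congr rfl fun x hx => ?_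
          rw [← Ex_mul k (R.erase x) (Real.exp (θ * d x))]
          congr 1
          refine congrArg _ (funext fun l => ?_)
          rw [← Real.exp_add]
          simp only [hd, List.map_cons, List.sum_cons]
          congr 1; ring
      _ ≤ ∑ x ∈ R, w x / W w R * (Real.exp (θ * d x) * Real.exp (k * v * θ ^ 2)) := by
          refine Finset.sum_le_sum fun x hx => mul_le_mul_of_nonneg_left ?_ (p_nonneg hw R x)
          exact mul_le_mul_of_nonneg_left (ih _ (hH.erase hx)) (Real.exp_pos _).le
      _ = (∑ x ∈ R, w x / W w R * Real.exp (θ * d x)) * Real.exp (k * v * θ ^ 2) := by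
          rw [Finset.sum_mul]; exact Finset.sum_congr rfl fun x _ => by ring
      _ ≤ Real.exp (v * θ ^ 2) * Real.exp (k * v * θ ^ 2) := by gcongr
      _ = _ := by rw [← Real.exp_add]; congr 1; push_cast; ring

/-- the martingale part -/
def Mt (w a : α → ℝ) (R : Finset α) (j : ℕ) (l : List α) : ℝ :=
  ((l.take j).map a).sum - ∑ i ∈ Finset.range j, mu w a (R \ (l.take i).toFinset)

lemma Mt_zero (R : Finset α) (l : List α) : Mt w a R 0 l = 0 := by simp [Mt]

lemma Mt_succ (R : Finset α) (j : ℕ) (x : α) (l : List α) :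
    Mt w a R (j + 1) (x :: l) = (a x - mu w a R) + Mt w a (R.erase x) j l := by
  simp only [Mt, Finset.sum_range_succ', List.take_succ_cons, List.map_cons, List.sum_cons,
    List.take_zero, erase_sdiff]
  simp; ring

lemma maximal (hw : ∀ x, 0 < w x) (ha : ∀ x, 0 ≤ a x) (hlam : 0 < lam)
    (hκ : ∑ x, w x * a x ≤ κ * lam) (hκ0 : 0 ≤ κ)
    {B v θ c : ℝ} (hB : ∀ x, a x + κ ≤ B) (hθ : θ * B ≤ 1) (hθ0 : 0 ≤ θ) (hc : |c| = 1)
    (hv : 2 * (∑ x, w x * a x ^ 2) / lam + 2 * κ ^ 2 ≤ v)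
    (k : ℕ) (R : Finset α) (hH : H w lam R k) (t : ℝ) :
    Ex w k R (fun l => if ∃ j ≤ k, t ≤ c * Mt w a R j l then 1 else 0) ≤
      Real.exp (-θ * t + k * v * θ ^ 2) := by
  have hv0 : 0 ≤ v := by
    refine le_trans ?_ hv
    have : 0 ≤ ∑ x, w x * a x ^ 2 :=
      Finset.sum_nonneg fun x _ => mul_nonneg (hw x).le (sq_nonneg _)
    positivity
  induction k generalizing R t with
  | zero =>
    simp only [Ex]
    split_ifs with h
    · obtain ⟨j, hj, h⟩ := h
      obtain rfl : j = 0 := by omega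
      rw [Mt_zero, mul_zero] at h
      apply Real.one_le_exp
      have := mul_nonneg hθ0 (sub_nonneg.2 h)
      simp; linarith
    · exact (Real.exp_pos _).le
  | succ k ih =>
    by_cases ht : t ≤ 0
    · calc _ ≤ Ex w (k + 1) R (fun _ => 1) := by
            refine Ex_mono hw _ _ _ _ fun l _ _ _ => ?_
            split_ifs <;> norm_num
        _ = 1 := Ex_const hlam _ _ hH _
        _ ≤ _ := by
          apply Real.one_le_exp
          have := mul_nonneg hθ0 (neg_nonneg.2 ht)
          have : 0 ≤ ((k + 1 : ℕ) : ℝ) * v * θ ^ 2 := by positivity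
          linarith
    · push Not at ht
      have hW : 0 < W w R := hlam.trans_le hH.le
      have hm := mu_bounds hw ha hlam hκ hκ0 R hH.le
      set d : α → ℝ := fun x => c * (a x - mu w a R) with hd
      have hd0 : ∑ x ∈ R, w x / W w R * d x = 0 := by
        have : ∀ x, w x / W w R * d x = c * (w x / W w R * a x) - c * mu w a R * (w x / W w R) := by
          intro x; simp only [hd]; ring
        simp only [this, Finset.sum_sub_distrib, ← Finset.mul_sum, sum_p hW]
        simp [mu]
      have hdb : ∀ x ∈ R, |d x| ≤ a x + κ := by
        intro x hx
        simp only [hd, abs_mul, hc, one_mul]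
        rw [abs_le]
        constructor <;> linarith [ha x]
      have h1 := one_step hw hlam R hH.le hκ0 ha hB (by rwa [abs_of_nonneg hθ0]) hv d hdb hd0
      simp only [Ex]
      have key : ∀ x l, (∃ j ≤ k + 1, t ≤ c * Mt w a R j (x :: l)) ↔
          ∃ j ≤ k, t - d x ≤ c * Mt w a (R.erase x) j l := by
        intro x l
        constructor
        · rintro ⟨j, hj, h⟩
          cases j with
          | zero => rw [Mt_zero, mul_zero] at h; linarith
          | succ j =>
            refine ⟨j, by omega, ?_⟩
            rw [Mt_succ] at h
            simp only [hd]; linarith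
        · rintro ⟨j, hj, h⟩
          refine ⟨j + 1, by omega, ?_⟩
          rw [Mt_succ]
          simp only [hd] at h; linarith
      simp only [key]
      calc _ ≤ ∑ x ∈ R, w x / W w R * Real.exp (-θ * (t - d x) + k * v * θ ^ 2) := by
            exact Finset.sum_le_sum fun x hx => mul_le_mul_of_nonneg_left (ih _ (hH.erase hx) _)
              (p_nonneg hw R x)
        _ = (∑ x ∈ R, w x / W w R * Real.exp (θ * d x)) * Real.exp (-θ * t + k * v * θ ^ 2) := by
            rw [Finset.sum_mul]
            refine Finset.sum_congr rfl fun x _ => ?_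
            rw [mul_assoc (w x / W w R), ← Real.exp_add]; congr 2; ring
        _ ≤ Real.exp (v * θ ^ 2) * Real.exp (-θ * t + k * v * θ ^ 2) := by gcongr
        _ = _ := by rw [← Real.exp_add]; congr 1; push_cast; ring

end
end SB

namespace SB
noncomputable section
variable {α : Type} [Fintype α]
variable {w : α → ℝ} {lam : ℝ}
variable {a : α → ℝ} {κ : ℝ}

/-- indicator -/
def ind (P : Prop) : ℝ := if P then 1 else 0

lemma ind_nonneg (P : Prop) : 0 ≤ ind P := by unfold ind; split_ifs <;> norm_num

lemma ind_le_of {P : Prop} {c : ℝ} (hc : 0 ≤ c) (h : P → 1 ≤ c) : ind P ≤ c := by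
  unfold ind; split_ifs with hP
  · exact h hP
  · exact hc

lemma ind_true {P : Prop} (h : P) : ind P = 1 := if_pos h

lemma tail_bound (hw : ∀ x, 0 < w x) (ha : ∀ x, 0 ≤ a x) (hlam : 0 < lam)
    (hκ : ∑ x, w x * a x ≤ κ * lam) (hκ0 : 0 ≤ κ)
    {B v θ : ℝ} (hB : ∀ x, a x + κ ≤ B) (hθ : θ * B ≤ 1) (hθ0 : 0 ≤ θ)
    (hv : 2 * (∑ x, w x * a x ^ 2) / lam + 2 * κ ^ 2 ≤ v)
    (k : ℕ) (R : Finset α) (hH : H w lam R k) (t : ℝ) :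
    Ex w k R (fun l => ind (t ≤ |(l.map a).sum - F w a k R|)) ≤
      2 * Real.exp (-θ * t + k * v * θ ^ 2) := by
  have h1 := mgf hw ha hlam hκ hκ0 (θ := θ) hB (by rwa [abs_of_nonneg hθ0]) hv k R hH
  have h2 := mgf hw ha hlam hκ hκ0 (θ := -θ) hB (by rwa [abs_neg, abs_of_nonneg hθ0]) hv k R hH
  have h3 : Ex w k R (fun l => ind (t ≤ |(l.map a).sum - F w a k R|)) ≤
      Ex w k R (fun l => Real.exp (-θ * t) * (Real.exp (θ * ((l.map a).sum - F w a k R)) +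
        Real.exp (-θ * ((l.map a).sum - F w a k R)))) := by
    refine Ex_mono hw _ _ _ _ fun l _ _ _ => ind_le_of (by positivity) fun h => ?_
    rw [mul_add, ← Real.exp_add, ← Real.exp_add]
    rcases le_abs.1 h with h | h
    · have : 1 ≤ Real.exp (-θ * t + θ * ((l.map a).sum - F w a k R)) := by
        apply Real.one_le_exp
        have := mul_nonneg hθ0 (sub_nonneg.2 h)
        linarith
      linarith [Real.exp_pos (-θ * t + -θ * ((l.map a).sum - F w a k R))]
    · have : 1 ≤ Real.exp (-θ * t + -θ * ((l.map a).sum - F w a k R)) := by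
        apply Real.one_le_exp
        have := mul_nonneg hθ0 (sub_nonneg.2 h)
        linarith
      linarith [Real.exp_pos (-θ * t + θ * ((l.map a).sum - F w a k R))]
  rw [Ex_mul, Ex_add] at h3
  refine h3.trans ?_
  rw [Real.exp_add]
  rw [neg_sq] at h2
  have := Real.exp_pos (-θ * t)
  nlinarith

lemma cosh_quad (u : ℝ) : 1 + u ^ 2 / 2 ≤ Real.cosh u := by
  wlog hu : 0 ≤ u with h
  · have := h (-u) (by linarith)
    rwa [Real.cosh_neg, neg_sq] at this
  have h1 := Real.cosh_two_mul (u / 2)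
  rw [mul_div_cancel₀ u (two_ne_zero), Real.cosh_sq] at h1
  have h2 : u / 2 ≤ Real.sinh (u / 2) := Real.self_le_sinh_iff.2 (by linarith)
  nlinarith

lemma second_moment (hw : ∀ x, 0 < w x) (ha : ∀ x, 0 ≤ a x) (hlam : 0 < lam)
    (hκ : ∑ x, w x * a x ≤ κ * lam) (hκ0 : 0 ≤ κ)
    {B v : ℝ} (hB : ∀ x, a x + κ ≤ B) (hB0 : 0 ≤ B)
    (hv : 2 * (∑ x, w x * a x ^ 2) / lam + 2 * κ ^ 2 ≤ v) (hv0 : 0 ≤ v)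
    (k : ℕ) (R : Finset α) (hH : H w lam R k) :
    Ex w k R (fun l => ((l.map a).sum - F w a k R) ^ 2) ≤ 4 * k * v := by
  have hk : (0 : ℝ) ≤ k * v := by positivity
  set θ : ℝ := 1 / (1 + B + k * v) with hθd
  have hθ0 : 0 < θ := by positivity
  have hθ : θ * B ≤ 1 := by
    rw [hθd, div_mul_eq_mul_div, one_mul, div_le_one (by positivity)]; linarith
  have hu : k * v * θ ≤ 1 := by
    rw [hθd, mul_one_div, div_le_one (by positivity)]; linarith
  have hθ1 : θ ≤ 1 := by
    rw [hθd, div_le_one (by positivity)]; linarith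
  have h1 := mgf hw ha hlam hκ hκ0 (θ := θ) hB (by rwa [abs_of_nonneg hθ0.le]) hv k R hH
  have h2 := mgf hw ha hlam hκ hκ0 (θ := -θ) hB (by rwa [abs_neg, abs_of_nonneg hθ0.le]) hv k R hH
  rw [neg_sq] at h2
  have hu2 : k * v * θ ^ 2 ≤ 1 := by nlinarith
  have hu3 : 0 ≤ k * v * θ ^ 2 := by positivity
  have h3 : Ex w k R (fun l => θ ^ 2 * ((l.map a).sum - F w a k R) ^ 2) ≤
      Ex w k R (fun l => (Real.exp (θ * ((l.map a).sum - F w a k R)) +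
        Real.exp (-θ * ((l.map a).sum - F w a k R))) - 2) := by
    refine Ex_mono hw _ _ _ _ fun l _ _ _ => ?_
    have := cosh_quad (θ * ((l.map a).sum - F w a k R))
    rw [Real.cosh_eq] at this
    rw [neg_mul]; linarith
  rw [Ex_mul, Ex_sub, Ex_add, Ex_const hlam _ _ hH] at h3
  have h4 := exp_quad (u := k * v * θ ^ 2) (by rw [abs_of_nonneg hu3]; exact hu2)
  have h5 : θ ^ 2 * Ex w k R (fun l => ((l.map a).sum - F w a k R) ^ 2) ≤ θ ^ 2 * (4 * k * v) := by
    nlinarith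
  exact le_of_mul_le_mul_left h5 (by positivity)

lemma maximal_abs (hw : ∀ x, 0 < w x) (ha : ∀ x, 0 ≤ a x) (hlam : 0 < lam)
    (hκ : ∑ x, w x * a x ≤ κ * lam) (hκ0 : 0 ≤ κ)
    {B v θ : ℝ} (hB : ∀ x, a x + κ ≤ B) (hθ : θ * B ≤ 1) (hθ0 : 0 ≤ θ)
    (hv : 2 * (∑ x, w x * a x ^ 2) / lam + 2 * κ ^ 2 ≤ v)
    (k : ℕ) (R : Finset α) (hH : H w lam R k) (t : ℝ) :
    Ex w k R (fun l => ind (∃ j ≤ k, t ≤ |Mt w a R j l|)) ≤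
      2 * Real.exp (-θ * t + k * v * θ ^ 2) := by
  have h1 : Ex w k R (fun l => ind (∃ j ≤ k, t ≤ 1 * Mt w a R j l)) ≤
      Real.exp (-θ * t + k * v * θ ^ 2) := by
    convert maximal hw ha hlam hκ hκ0 (c := 1) hB hθ hθ0 (by simp) hv k R hH t using 4
    unfold ind; congr
  have h2 : Ex w k R (fun l => ind (∃ j ≤ k, t ≤ -1 * Mt w a R j l)) ≤
      Real.exp (-θ * t + k * v * θ ^ 2) := by
    convert maximal hw ha hlam hκ hκ0 (c := -1) hB hθ hθ0 (by simp) hv k R hH t using 4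
    unfold ind; congr
  have h3 := Ex_mono hw k R (fun l => ind (∃ j ≤ k, t ≤ |Mt w a R j l|))
    (fun l => ind (∃ j ≤ k, t ≤ 1 * Mt w a R j l) + ind (∃ j ≤ k, t ≤ -1 * Mt w a R j l))
    (fun l _ _ _ => ind_le_of (add_nonneg (ind_nonneg _) (ind_nonneg _)) fun ⟨j, hj, h⟩ => by
      rcases le_abs.1 h with h | h
      · rw [ind_true ⟨j, hj, by linarith⟩]; linarith [ind_nonneg (∃ j ≤ k, t ≤ -1 * Mt w a R j l)]
      · rw [ind_true (P := ∃ j ≤ k, t ≤ -1 * Mt w a R j l) ⟨j, hj, by linarith⟩]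
        linarith [ind_nonneg (∃ j ≤ k, t ≤ 1 * Mt w a R j l)])
  rw [Ex_add] at h3
  linarith

lemma mu_formula (R : Finset α) : mu w a R = (∑ x ∈ R, w x * a x) / W w R := by
  rw [mu, Finset.sum_div]; exact Finset.sum_congr rfl fun x _ => by ring

lemma sdiff_sum (b : α → ℝ) {l : List α} (hn : l.Nodup) :
    ∑ x ∈ Finset.univ \ l.toFinset, b x = ∑ x, b x - (l.map b).sum := by
  rw [← List.sum_toFinset _ hn, ← Finset.sum_sdiff (Finset.subset_univ l.toFinset)]; ring

/-- squared weights -/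
def sq (w : α → ℝ) (x : α) : ℝ := w x * w x

lemma mu_list {l : List α} (hn : l.Nodup) : mu w w (Finset.univ \ l.toFinset) =
    (∑ x, sq w x - (l.map (sq w)).sum) / (W w Finset.univ - (l.map w).sum) := by
  rw [mu_formula, W, sdiff_sum _ hn, sdiff_sum _ hn]; rfl

lemma W_list {l : List α} (hn : l.Nodup) : W w (Finset.univ \ l.toFinset) =
    W w Finset.univ - (l.map w).sum := by
  rw [W, sdiff_sum _ hn]; rfl

lemma list_sum_nonneg {b : α → ℝ} (hb : ∀ x, 0 ≤ b x) (l : List α) : 0 ≤ (l.map b).sum := by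
  apply List.sum_nonneg; intro y hy; obtain ⟨x, _, rfl⟩ := List.mem_map.1 hy; exact hb x

lemma take_sum_mono {b : α → ℝ} (hb : ∀ x, 0 ≤ b x) (l : List α) {i j : ℕ} (h : i ≤ j) :
    ((l.take i).map b).sum ≤ ((l.take j).map b).sum := by
  obtain ⟨s, rfl⟩ := Nat.exists_eq_add_of_le h
  rw [List.take_add, List.map_append, List.sum_append]
  linarith [list_sum_nonneg hb ((l.drop i).take s)]

lemma mu_upper (hw : ∀ x, 0 < w x) (hlam : 0 < lam) {l : List α} (hn : l.Nodup)
    (hl : lam ≤ W w (Finset.univ \ l.toFinset)) :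
    mu w w (Finset.univ \ l.toFinset) ≤
      mu w w Finset.univ + mu w w Finset.univ * (l.map w).sum / lam := by
  have hS := list_sum_nonneg (fun x => (hw x).le) l
  have hQ : 0 ≤ (l.map (sq w)).sum := list_sum_nonneg (fun x => mul_self_nonneg _) l
  have hs : 0 ≤ ∑ x, sq w x := Finset.sum_nonneg fun x _ => mul_self_nonneg _
  rw [mu_list hn, mu_formula Finset.univ]
  rw [W_list hn] at hl
  change _ ≤ (∑ x, sq w x) / _ + (∑ x, sq w x) / _ * _ / lam
  generalize (l.map w).sum = S at *
  generalize (l.map (sq w)).sum = Q at *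
  generalize ∑ x, sq w x = s at *
  generalize W w Finset.univ = L at *
  have hLS : 0 < L - S := by linarith
  have hL : 0 < L := by linarith
  have e : s / (L - S) = s / L + s / L * S / (L - S) := by field_simp; ring
  calc (s - Q) / (L - S) ≤ s / (L - S) := by gcongr; linarith
    _ = _ := e
    _ ≤ _ := by gcongr

lemma mu_lower (hw : ∀ x, 0 < w x) (hlam : 0 < lam) {l : List α} (hn : l.Nodup)
    (hl : lam ≤ W w (Finset.univ \ l.toFinset)) :
    mu w w Finset.univ - (l.map (sq w)).sum / lam ≤ mu w w (Finset.univ \ l.toFinset) := by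
  have hS := list_sum_nonneg (fun x => (hw x).le) l
  have hQ : 0 ≤ (l.map (sq w)).sum := list_sum_nonneg (fun x => mul_self_nonneg _) l
  have hQs : 0 ≤ ∑ x, sq w x - (l.map (sq w)).sum := by
    rw [← sdiff_sum _ hn]; exact Finset.sum_nonneg fun x _ => mul_self_nonneg _
  rw [mu_list hn, mu_formula Finset.univ]
  rw [W_list hn] at hl
  change (∑ x, sq w x) / _ - _ ≤ _
  generalize (l.map w).sum = S at *
  generalize (l.map (sq w)).sum = Q at *
  generalize ∑ x, sq w x = s at *
  generalize W w Finset.univ = L at *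
  have hLS : 0 < L - S := by linarith
  have hL : 0 < L := by linarith
  calc s / L - Q / lam ≤ s / L - Q / L := by gcongr; linarith
    _ = (s - Q) / L := by rw [sub_div]
    _ ≤ _ := by gcongr; linarith

lemma take_le_lam {m : ℕ} (hH : H w lam Finset.univ (m + 1)) {l : List α}
    (i : ℕ) (hi : i ≤ m) : lam ≤ W w (Finset.univ \ (l.take i).toFinset) :=
  (hH.mono (Nat.le_succ m)).list ((List.length_take_le i l).trans hi) (by simp)

variable {κ₂ : ℝ}

lemma F_lower (hw : ∀ x, 0 < w x) (hlam : 0 < lam)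
    (hκ2 : ∑ x, w x * sq w x ≤ κ₂ * lam) (hκ20 : 0 ≤ κ₂)
    {m : ℕ} (hH : H w lam Finset.univ (m + 1)) (i : ℕ) (hi : i ≤ m) :
    mu w w Finset.univ - κ₂ * m / lam ≤ F w w (i + 1) Finset.univ - F w w i Finset.univ := by
  have hHi : H w lam Finset.univ i := hH.mono (by omega)
  rw [F_diff hlam i _ (hH.mono (by omega))]
  have h1 := Ex_mono hw i Finset.univ
    (fun l => mu w w Finset.univ - (1 / lam) * (l.map (sq w)).sum)
    (fun l => mu w w (Finset.univ \ l.toFinset)) (fun l hl hn hm => by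
      have := mu_lower hw hlam hn (hHi.list hl.le hm)
      rwa [one_div_mul_eq_div])
  rw [Ex_sub, Ex_mul, Ex_const hlam _ _ hHi] at h1
  have h2 := F_le hw (fun x => mul_self_nonneg (w x)) hlam hκ2 hκ20 i _ hHi
  refine le_trans ?_ h1
  have h3 : Ex w i Finset.univ (fun l => (l.map (sq w)).sum) ≤ κ₂ * m := by
    refine h2.trans ?_
    rw [mul_comm]; gcongr
  rw [one_div_mul_eq_div]
  gcongr

lemma incr_bound (hw : ∀ x, 0 < w x) (hlam : 0 < lam)
    (hκ : ∑ x, w x * w x ≤ κ * lam) (hκ0 : 0 ≤ κ)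
    (hκ2 : ∑ x, w x * sq w x ≤ κ₂ * lam) (hκ20 : 0 ≤ κ₂)
    {m : ℕ} (hH : H w lam Finset.univ (m + 1)) {l : List α} (hn : l.Nodup)
    {t h : ℝ} (hM : ∀ j ≤ m, |Mt w w Finset.univ j l| < t)
    (g j : ℕ) (hgj : g ≤ j) (hjm : j ≤ m) (hh : (j : ℝ) - g ≤ h) :
    (((l.take j).map w).sum - F w w j Finset.univ) -
      (((l.take g).map w).sum - F w w g Finset.univ) ≤
      2 * t + h * ((κ * ((l.take m).map w).sum + κ₂ * m) / lam) := by
  have hμ := mu_bounds hw (fun x => (hw x).le) hlam hκ hκ0 Finset.univ hH.le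
  have hSm := list_sum_nonneg (fun x => (hw x).le) (l.take m)
  set μ0 := mu w w Finset.univ with hμ0
  set C := (κ * ((l.take m).map w).sum + κ₂ * m) / lam with hC
  have hC0 : 0 ≤ C := by positivity
  have e1 : ((l.take j).map w).sum - ((l.take g).map w).sum =
      Mt w w Finset.univ j l - Mt w w Finset.univ g l +
        ∑ i ∈ Finset.Ico g j, mu w w (Finset.univ \ (l.take i).toFinset) := by
    rw [Finset.sum_Ico_eq_sub _ hgj]; simp only [Mt]; ring
  have e2 : F w w j Finset.univ - F w w g Finset.univ =
      ∑ i ∈ Finset.Ico g j, (F w w (i + 1) Finset.univ - F w w i Finset.univ) := by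
    rw [Finset.sum_Ico_sub (fun i => F w w i Finset.univ) hgj]
  have e3 : ∑ i ∈ Finset.Ico g j, mu w w (Finset.univ \ (l.take i).toFinset) -
      ∑ i ∈ Finset.Ico g j, (F w w (i + 1) Finset.univ - F w w i Finset.univ) ≤
      ∑ i ∈ Finset.Ico g j, C := by
    rw [← Finset.sum_sub_distrib]
    refine Finset.sum_le_sum fun i hi => ?_
    have him : i ≤ m := (Finset.mem_Ico.1 hi).2.le.trans hjm
    have h1 := mu_upper hw hlam (hn.sublist (List.take_sublist i l)) (take_le_lam hH i him)
    have h2 := F_lower hw hlam hκ2 hκ20 hH i him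
    have h3 : mu w w Finset.univ * ((l.take i).map w).sum / lam ≤
        κ * ((l.take m).map w).sum / lam := by
      have h4 := take_sum_mono (fun x => (hw x).le) l him
      have h5 := list_sum_nonneg (fun x => (hw x).le) (l.take i)
      gcongr
      exact hμ.2
    rw [hC, add_div]
    linarith
  simp only [Finset.sum_const, Nat.card_Ico, nsmul_eq_mul] at e3
  rw [Nat.cast_sub hgj] at e3
  have h4 := abs_lt.1 (hM j hjm)
  have h5 := abs_lt.1 (hM g (hgj.trans hjm))
  have h6 : ((j : ℝ) - g) * C ≤ h * C := by gcongr
  linarith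

/-- Case 1: grid argument -/
lemma case1 (hw : ∀ x, 0 < w x) (hlam : 0 < lam)
    (hκ : ∑ x, w x * w x ≤ κ * lam) (hκ0 : 0 ≤ κ)
    (hκ2 : ∑ x, w x * sq w x ≤ κ₂ * lam) (hκ20 : 0 ≤ κ₂)
    {m : ℕ} (hH : H w lam Finset.univ (m + 1))
    {B v θ : ℝ} (hB : ∀ x, w x + κ ≤ B) (hθ : θ * B ≤ 1) (hθ0 : 0 ≤ θ)
    (hv : 2 * (∑ x, w x * w x ^ 2) / lam + 2 * κ ^ 2 ≤ v)
    {t h y : ℝ} (G : Finset ℕ) (hG : ∀ g ∈ G, g ≤ m) (hmG : m ∈ G)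
    (hG1 : ∀ j ≤ m, ∃ g ∈ G, g ≤ j ∧ (j : ℝ) - g ≤ h)
    (hG2 : ∀ j ≤ m, ∃ g ∈ G, j ≤ g ∧ (g : ℝ) - j ≤ h) (hh : 0 ≤ h)
    (hy : 3 * t + h * ((κ * (m * κ + t) + κ₂ * m) / lam) ≤ y) :
    Ex w m Finset.univ (fun l => ind (∃ j ≤ m,
      y ≤ |((l.take j).map w).sum - F w w j Finset.univ|)) ≤
      (2 + 2 * G.card) * Real.exp (-θ * t + m * v * θ ^ 2) := by
  have hv0 : 0 ≤ v := by
    refine le_trans ?_ hv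
    have : 0 ≤ ∑ x, w x * w x ^ 2 :=
      Finset.sum_nonneg fun x _ => mul_nonneg (hw x).le (sq_nonneg _)
    positivity
  have hw' : ∀ x, 0 ≤ w x := fun x => (hw x).le
  have hHm : H w lam Finset.univ m := hH.mono (by omega)
  have h1 := maximal_abs hw hw' hlam hκ hκ0 hB hθ hθ0 hv m Finset.univ hHm t
  have h2 : ∀ g ∈ G, Ex w m Finset.univ
      (fun l => ind (t ≤ |((l.take g).map w).sum - F w w g Finset.univ|)) ≤
      2 * Real.exp (-θ * t + m * v * θ ^ 2) := by
    intro g hg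
    have hgm := hG g hg
    obtain ⟨s, hs⟩ := Nat.exists_eq_add_of_le hgm
    have e := Ex_take hlam g s Finset.univ (by rw [← hs]; exact hHm)
      (fun l => ind (t ≤ |(l.map w).sum - F w w g Finset.univ|))
    rw [← hs] at e
    rw [e]
    refine (tail_bound hw hw' hlam hκ hκ0 hB hθ hθ0 hv g Finset.univ (hHm.mono hgm) t).trans ?_
    gcongr
  have h3 := Ex_mono hw m Finset.univ (fun l => ind (∃ j ≤ m,
      y ≤ |((l.take j).map w).sum - F w w j Finset.univ|))
      (fun l => ind (∃ j ≤ m, t ≤ |Mt w w Finset.univ j l|) +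
        ∑ g ∈ G, ind (t ≤ |((l.take g).map w).sum - F w w g Finset.univ|)) (by
    intro l _ hn _
    have hs0 : 0 ≤ ∑ g ∈ G, ind (t ≤ |((l.take g).map w).sum - F w w g Finset.univ|) :=
      Finset.sum_nonneg fun g _ => ind_nonneg _
    refine ind_le_of (add_nonneg (ind_nonneg _) hs0) ?_
    rintro ⟨j, hj, hyj⟩
    by_cases hM : ∃ j ≤ m, t ≤ |Mt w w Finset.univ j l|
    · rw [ind_true hM]; linarith
    by_cases hg : ∃ g ∈ G, t ≤ |((l.take g).map w).sum - F w w g Finset.univ|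
    · obtain ⟨g, hg, hgt⟩ := hg
      have := Finset.single_le_sum (f := fun g => ind (t ≤ |((l.take g).map w).sum -
        F w w g Finset.univ|)) (fun g _ => ind_nonneg _) hg
      simp only [ind_true hgt] at this
      linarith [ind_nonneg (∃ j ≤ m, t ≤ |Mt w w Finset.univ j l|)]
    exfalso
    push Not at hM hg
    have hSm := abs_lt.1 (hg m hmG)
    have hFm := F_le hw hw' hlam hκ hκ0 m _ hHm
    have hE : h * ((κ * ((l.take m).map w).sum + κ₂ * m) / lam) ≤
        h * ((κ * (m * κ + t) + κ₂ * m) / lam) := by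
      gcongr; linarith
    obtain ⟨g, hgG, hgj, hgh⟩ := hG1 j hj
    obtain ⟨g', hgG', hgj', hgh'⟩ := hG2 j hj
    have b1 := incr_bound hw hlam hκ hκ0 hκ2 hκ20 hH hn hM g j hgj hj hgh
    have b2 := incr_bound hw hlam hκ hκ0 hκ2 hκ20 hH hn hM j g' hgj' (hG _ hgG') hgh'
    have c1 := abs_lt.1 (hg g hgG)
    have c2 := abs_lt.1 (hg g' hgG')
    have : |((l.take j).map w).sum - F w w j Finset.univ| < y := by
      rw [abs_lt]; constructor <;> linarith
    linarith)
  rw [Ex_add, Ex_sum] at h3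
  have h4 := Finset.sum_le_sum h2
  simp only [Finset.sum_const, nsmul_eq_mul] at h4
  linarith

/-- deviation of the conditional mean -/
lemma mu_dev (hw : ∀ x, 0 < w x) (hlam : 0 < lam)
    (hκ : ∑ x, w x * w x ≤ κ * lam) (hκ0 : 0 ≤ κ)
    (hκ2 : ∑ x, w x * sq w x ≤ κ₂ * lam) (hκ20 : 0 ≤ κ₂)
    {m : ℕ} (hH : H w lam Finset.univ (m + 1))
    {B B₂ v v₂ τ : ℝ} (hB : ∀ x, w x + κ ≤ B) (hB0 : 0 ≤ B)
    (hB2 : ∀ x, sq w x + κ₂ ≤ B₂) (hB20 : 0 ≤ B₂) (hτ : 0 < τ)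
    (hv : 2 * (∑ x, w x * w x ^ 2) / lam + 2 * κ ^ 2 ≤ v) (hv0 : 0 ≤ v)
    (hv2 : 2 * (∑ x, w x * sq w x ^ 2) / lam + 2 * κ₂ ^ 2 ≤ v₂) (hv20 : 0 ≤ v₂)
    (i : ℕ) (hi : i ≤ m) :
    Ex w i Finset.univ (fun l => |mu w w (Finset.univ \ l.toFinset) -
      (F w w (i + 1) Finset.univ - F w w i Finset.univ)|) ≤
      2 * ((τ + 4 * m * v₂ / τ) + κ * (τ + 4 * m * v / τ)) / lam := by
  have hw' : ∀ x, 0 ≤ w x := fun x => (hw x).le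
  have hHi : H w lam Finset.univ i := hH.mono (by omega)
  have m1 := second_moment hw hw' hlam hκ hκ0 hB hB0 hv hv0 i _ hHi
  have m2 := second_moment hw (fun x => mul_self_nonneg (w x)) hlam hκ2 hκ20 hB2 hB20 hv2 hv20
    i _ hHi
  set e := F w w i Finset.univ with he
  set q := F w (sq w) i Finset.univ with hq
  set L := W w Finset.univ with hL
  set s := ∑ x, sq w x with hs
  have he1 : e ≤ L - lam := by
    have := Ex_mono hw i Finset.univ (fun l => (l.map w).sum) (fun _ => L - lam)
      (fun l hl hn hm => by
        have := hHi.list hl.le hm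
        rw [W_list hn] at this; linarith)
    rwa [Ex_const hlam _ _ hHi] at this
  have hq1 : q ≤ s := by
    have := Ex_mono hw i Finset.univ (fun l => (l.map (sq w)).sum) (fun _ => s)
      (fun l hl hn hm => by
        have : 0 ≤ s - (l.map (sq w)).sum := by
          rw [hs, ← sdiff_sum _ hn]; exact Finset.sum_nonneg fun x _ => mul_self_nonneg _
        linarith)
    rwa [Ex_const hlam _ _ hHi] at this
  have hq0 : 0 ≤ q := by
    have := Ex_mono hw i Finset.univ (fun _ => 0) (fun l => (l.map (sq w)).sum)
      (fun l hl hn hm => list_sum_nonneg (fun x => mul_self_nonneg _) l)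
    rwa [Ex_const hlam _ _ hHi] at this
  have hs1 : s ≤ κ * lam := hκ
  set c := (s - q) / (L - e) with hc
  have key : ∀ l : List α, l.length = i → l.Nodup → (∀ x ∈ l, x ∈ Finset.univ) →
      |mu w w (Finset.univ \ l.toFinset) - c| ≤
        (1 / lam) * |(l.map (sq w)).sum - q| + (κ / lam) * |(l.map w).sum - e| := by
    intro l hl hn hm
    have hlam' := hHi.list hl.le hm
    rw [W_list hn] at hlam'
    rw [mu_list hn]
    change |(s - (l.map (sq w)).sum) / (L - (l.map w).sum) - c| ≤ _
    generalize (l.map w).sum = S at *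
    generalize (l.map (sq w)).sum = Q at *
    have h1 : 0 < L - S := by linarith
    have h2 : 0 < L - e := by linarith
    have e1 : (s - Q) / (L - S) - c =
        (1 / (L - S)) * (q - Q) + ((s - q) / (L - e) / (L - S)) * (S - e) := by
      rw [hc]; field_simp; ring
    rw [e1]
    refine (abs_add_le _ _).trans ?_
    rw [abs_mul, abs_mul, abs_sub_comm q Q]
    have hc0 : 0 ≤ (s - q) / (L - e) := div_nonneg (by linarith) h2.le
    have hck : (s - q) / (L - e) ≤ κ := by
      rw [div_le_iff₀ h2]; nlinarith
    rw [abs_of_nonneg (by positivity : 0 ≤ 1 / (L - S)), abs_of_nonneg (div_nonneg hc0 h1.le)]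
    gcongr
  have habs : ∀ z : ℝ, |z| ≤ τ + (1 / τ) * z ^ 2 := by
    intro z
    rw [← sq_abs z]
    have h0 := abs_nonneg z
    by_cases hz : |z| ≤ τ
    · have : 0 ≤ 1 / τ * |z| ^ 2 := by positivity
      linarith
    · push Not at hz
      have : |z| ≤ 1 / τ * |z| ^ 2 := by
        rw [one_div_mul_eq_div, le_div_iff₀ hτ]; nlinarith
      linarith
  have k1 : Ex w i Finset.univ (fun l => |mu w w (Finset.univ \ l.toFinset) - c|) ≤
      ((τ + 4 * m * v₂ / τ) + κ * (τ + 4 * m * v / τ)) / lam := by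
    have := Ex_mono hw i Finset.univ (fun l => |mu w w (Finset.univ \ l.toFinset) - c|)
      (fun l => (1 / lam) * (τ + (1 / τ) * ((l.map (sq w)).sum - q) ^ 2) +
        (κ / lam) * (τ + (1 / τ) * ((l.map w).sum - e) ^ 2)) (fun l hl hn hm => by
        refine (key l hl hn hm).trans ?_
        gcongr
        · exact habs _
        · exact habs _)
    rw [Ex_add, Ex_mul, Ex_mul, Ex_add, Ex_add, Ex_mul, Ex_mul, Ex_const hlam _ _ hHi] at this
    refine this.trans ?_
    have him : (i : ℝ) ≤ m := by exact_mod_cast hi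
    have n1 : 4 * i * v ≤ 4 * m * v := by gcongr
    have n2 : 4 * i * v₂ ≤ 4 * m * v₂ := by gcongr
    calc _ ≤ 1 / lam * (τ + 1 / τ * (4 * m * v₂)) + κ / lam * (τ + 1 / τ * (4 * m * v)) := by
          gcongr
          · exact m2.trans n2
          · exact m1.trans n1
      _ = _ := by ring
  have k2 : |F w w (i + 1) Finset.univ - e - c| ≤
      Ex w i Finset.univ (fun l => |mu w w (Finset.univ \ l.toFinset) - c|) := by
    rw [he, F_diff hlam i _ (hH.mono (by omega))]
    have u1 := Ex_mono hw i Finset.univ (fun l => mu w w (Finset.univ \ l.toFinset) - c)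
      (fun l => |mu w w (Finset.univ \ l.toFinset) - c|) (fun l _ _ _ => le_abs_self _)
    have u2 := Ex_mono hw i Finset.univ (fun l => c - mu w w (Finset.univ \ l.toFinset))
      (fun l => |mu w w (Finset.univ \ l.toFinset) - c|) (fun l _ _ _ => by
        rw [abs_sub_comm]; exact le_abs_self _)
    rw [Ex_sub, Ex_const hlam _ _ hHi] at u1 u2
    rw [abs_le]; constructor <;> linarith
  have k3 := Ex_mono hw i Finset.univ (fun l => |mu w w (Finset.univ \ l.toFinset) -
      (F w w (i + 1) Finset.univ - e)|) (fun l => |mu w w (Finset.univ \ l.toFinset) - c| +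
      |F w w (i + 1) Finset.univ - e - c|) (fun l _ _ _ => by
        have := abs_sub_le (mu w w (Finset.univ \ l.toFinset)) c (F w w (i + 1) Finset.univ - e)
        rwa [abs_sub_comm c] at this)
  rw [Ex_add, Ex_const hlam _ _ hHi] at k3
  refine k3.trans ?_
  rw [mul_div_assoc]; linarith

/-- Case 2: moment argument -/
lemma case2 (hw : ∀ x, 0 < w x) (hlam : 0 < lam)
    (hκ : ∑ x, w x * w x ≤ κ * lam) (hκ0 : 0 ≤ κ)
    (hκ2 : ∑ x, w x * sq w x ≤ κ₂ * lam) (hκ20 : 0 ≤ κ₂)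
    {m : ℕ} (hH : H w lam Finset.univ (m + 1))
    {B B₂ v v₂ τ θ t : ℝ} (hB : ∀ x, w x + κ ≤ B) (hB0 : 0 ≤ B)
    (hθ : θ * B ≤ 1) (hθ0 : 0 ≤ θ)
    (hB2 : ∀ x, sq w x + κ₂ ≤ B₂) (hB20 : 0 ≤ B₂) (hτ : 0 < τ) (ht : 0 < t)
    (hv : 2 * (∑ x, w x * w x ^ 2) / lam + 2 * κ ^ 2 ≤ v) (hv0 : 0 ≤ v)
    (hv2 : 2 * (∑ x, w x * sq w x ^ 2) / lam + 2 * κ₂ ^ 2 ≤ v₂) (hv20 : 0 ≤ v₂) :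
    Ex w m Finset.univ (fun l => ind (∃ j ≤ m,
      2 * t ≤ |((l.take j).map w).sum - F w w j Finset.univ|)) ≤
      2 * Real.exp (-θ * t + m * v * θ ^ 2) +
      (1 / t) * (m * (2 * ((τ + 4 * m * v₂ / τ) + κ * (τ + 4 * m * v / τ)) / lam)) := by
  have hw' : ∀ x, 0 ≤ w x := fun x => (hw x).le
  have hHm : H w lam Finset.univ m := hH.mono (by omega)
  have h1 := maximal_abs hw hw' hlam hκ hκ0 hB hθ hθ0 hv m Finset.univ hHm t
  set D : ℕ → List α → ℝ := fun i l => |mu w w (Finset.univ \ l.toFinset) -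
      (F w w (i + 1) Finset.univ - F w w i Finset.univ)| with hD
  have hDi : ∀ i ∈ Finset.range m, Ex w m Finset.univ (fun l => D i (l.take i)) ≤
      2 * ((τ + 4 * m * v₂ / τ) + κ * (τ + 4 * m * v / τ)) / lam := by
    intro i hi
    have him : i ≤ m := (Finset.mem_range.1 hi).le
    obtain ⟨s, hs⟩ := Nat.exists_eq_add_of_le him
    have e := Ex_take hlam i s Finset.univ (by rw [← hs]; exact hHm) (D i)
    rw [← hs] at e
    rw [e]
    exact mu_dev hw hlam hκ hκ0 hκ2 hκ20 hH hB hB0 hB2 hB20 hτ hv hv0 hv2 hv20 i him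
  have h3 := Ex_mono hw m Finset.univ (fun l => ind (∃ j ≤ m,
      2 * t ≤ |((l.take j).map w).sum - F w w j Finset.univ|))
      (fun l => ind (∃ j ≤ m, t ≤ |Mt w w Finset.univ j l|) +
        (1 / t) * ∑ i ∈ Finset.range m, D i (l.take i)) (by
    intro l _ hn _
    have hs0 : 0 ≤ ∑ i ∈ Finset.range m, D i (l.take i) :=
      Finset.sum_nonneg fun g _ => abs_nonneg _
    refine ind_le_of (add_nonneg (ind_nonneg _) (by positivity)) ?_
    rintro ⟨j, hj, hyj⟩
    by_cases hM : ∃ j ≤ m, t ≤ |Mt w w Finset.univ j l|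
    · rw [ind_true hM]
      have : 0 ≤ (1 / t) * ∑ i ∈ Finset.range m, D i (l.take i) := by positivity
      linarith
    push Not at hM
    have hMj := hM j hj
    have e1 : ((l.take j).map w).sum - F w w j Finset.univ = Mt w w Finset.univ j l +
        ∑ i ∈ Finset.range j, (mu w w (Finset.univ \ (l.take i).toFinset) -
          (F w w (i + 1) Finset.univ - F w w i Finset.univ)) := by
      rw [Finset.sum_sub_distrib, Finset.sum_range_sub (fun i => F w w i Finset.univ), F_zero]
      simp only [Mt]; ring
    have e2 : |∑ i ∈ Finset.range j, (mu w w (Finset.univ \ (l.take i).toFinset) -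
          (F w w (i + 1) Finset.univ - F w w i Finset.univ))| ≤
          ∑ i ∈ Finset.range m, D i (l.take i) := by
      refine (Finset.abs_sum_le_sum_abs _ _).trans ?_
      exact Finset.sum_le_sum_of_subset_of_nonneg
        (fun i hi => Finset.mem_range.2 ((Finset.mem_range.1 hi).trans_le hj))
        (fun i _ _ => abs_nonneg _)
    rw [e1] at hyj
    have e3 := hyj.trans (abs_add_le _ _)
    have e4 : t ≤ ∑ i ∈ Finset.range m, D i (l.take i) := by linarith
    have e5 : 1 ≤ (1 / t) * ∑ i ∈ Finset.range m, D i (l.take i) := by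
      rw [one_div_mul_eq_div, le_div_iff₀ ht]; linarith
    linarith [ind_nonneg (∃ j ≤ m, t ≤ |Mt w w Finset.univ j l|)])
  rw [Ex_add, Ex_mul, Ex_sum] at h3
  have h4 := Finset.sum_le_sum hDi
  simp only [Finset.sum_const, nsmul_eq_mul, Finset.card_range] at h4
  have h5 := mul_le_mul_of_nonneg_left h4 (by positivity : 0 ≤ 1 / t)
  linarith
lemma W_pos (hw : ∀ x, 0 < w x) {R : Finset α} (hR : 0 < R.card) : 0 < W w R :=
  Finset.sum_pos (fun x _ => hw x) (Finset.card_pos.1 hR)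

lemma Ex_const' (hw : ∀ x, 0 < w x) (k : ℕ) (R : Finset α) (hR : k ≤ R.card) (c : ℝ) :
    Ex w k R (fun _ => c) = c := by
  induction k generalizing R with
  | zero => rfl
  | succ k ih =>
    simp only [Ex]
    rw [Finset.sum_congr rfl (g := fun x => w x / W w R * c)
      (fun x hx => by rw [ih _ (by rw [Finset.card_erase_of_mem hx]; omega)]), ← Finset.sum_mul,
      sum_p (W_pos hw (by omega)), one_mul]

lemma Ex_take' (hw : ∀ x, 0 < w x) (j s : ℕ) (R : Finset α) (hR : j + s ≤ R.card)
    (f : List α → ℝ) : Ex w (j + s) R (fun l => f (l.take j)) = Ex w j R f := by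
  induction j generalizing R f with
  | zero =>
    simp only [List.take_zero]
    exact Ex_const' hw _ _ hR _
  | succ j ih =>
    have : j + 1 + s = (j + s) + 1 := by omega
    rw [this] at hR ⊢
    simp only [Ex, List.take_succ_cons]
    refine Finset.sum_congr rfl fun x hx => ?_
    rw [ih _ (by rw [Finset.card_erase_of_mem hx]; omega) (fun l => f (x :: l))]

/-- probability of a given sequence of picks -/
def Q (w : α → ℝ) (R : Finset α) (r : ℕ) (ω : Fin r → α) : ℝ :=
  if Function.Injective ω ∧ ∀ i, ω i ∈ R then
    ∏ i : Fin r, w (ω i) / (W w R - ∑ k ∈ Finset.univ.filter fun k => k < i, w (ω k))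
  else 0

lemma Q_cons (R : Finset α) (r : ℕ) (x : α) (ω : Fin r → α) :
    Q w R (r + 1) (Fin.cons x ω) = if x ∈ R then w x / W w R * Q w (R.erase x) r ω else 0 := by
  have hiff : (Function.Injective (Fin.cons x ω : Fin (r + 1) → α) ∧
      ∀ i, (Fin.cons x ω : Fin (r + 1) → α) i ∈ R) ↔
      x ∈ R ∧ (Function.Injective ω ∧ ∀ i, ω i ∈ R.erase x) := by
    rw [Fin.cons_injective_iff, Fin.forall_fin_succ]
    simp only [Fin.cons_zero, Fin.cons_succ, Finset.mem_erase, Set.mem_range, not_exists]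
    constructor
    · rintro ⟨⟨h1, h2⟩, h3, h4⟩
      exact ⟨h3, h2, fun i => ⟨h1 i, h4 i⟩⟩
    · rintro ⟨h3, h2, h4⟩
      exact ⟨⟨fun i => (h4 i).1, h2⟩, h3, fun i => (h4 i).2⟩
  unfold Q
  by_cases hx : x ∈ R
  · rw [if_pos hx]
    by_cases h : Function.Injective ω ∧ ∀ i, ω i ∈ R.erase x
    · rw [if_pos (hiff.2 ⟨hx, h⟩), if_pos h, Fin.prod_univ_succ]
      have hsplit : W w R = w x + W w (R.erase x) := by
        simp only [W]; rw [Finset.add_sum_erase _ _ hx]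
      congr 1
      · simp
      · refine Finset.prod_congr rfl fun i _ => ?_
        rw [Finset.sum_filter, Fin.sum_univ_succ, Finset.sum_filter]
        simp only [Fin.cons_succ, Fin.cons_zero, Fin.succ_lt_succ_iff, Fin.succ_pos, if_true]
        rw [hsplit]
        congr 1
        ring
    · rw [if_neg (fun h' => h (hiff.1 h').2), if_neg h, mul_zero]
  · rw [if_neg hx, if_neg (fun h' => hx (hiff.1 h').1)]

lemma Ex_eq_sum (r : ℕ) (R : Finset α) (f : List α → ℝ) :
    Ex w r R f = ∑ ω : Fin r → α, Q w R r ω * f (List.ofFn ω) := by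
  induction r generalizing R f with
  | zero => simp [Ex, Q, Function.injective_of_subsingleton]
  | succ r ih =>
    rw [← (Fin.consEquiv (fun _ : Fin (r + 1) => α)).sum_comp, Fintype.sum_prod_type]
    simp only [Ex]
    have : ∀ x : α, ∑ ω : Fin r → α, Q w R (r + 1) (Fin.consEquiv (fun _ => α) (x, ω)) *
        f (List.ofFn (Fin.consEquiv (fun _ => α) (x, ω))) =
        if x ∈ R then w x / W w R * Ex w r (R.erase x) (fun l => f (x :: l)) else 0 := by
      intro x
      rw [ih]
      simp only [Fin.consEquiv, Equiv.coe_fn_mk, Q_cons, List.ofFn_cons]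
      by_cases hx : x ∈ R
      · simp only [if_pos hx, Finset.mul_sum, mul_assoc]
      · simp [if_neg hx]
    rw [Finset.sum_congr rfl fun x _ => this x, ← Finset.sum_filter]
    simp

variable {n : ℕ} {wn : Fin n → ℝ}

/-- weight of a permutation -/
def pw (wn : Fin n → ℝ) (σ : Equiv.Perm (Fin n)) : ℝ :=
  ∏ i : Fin n, wn (σ i) / ((∑ k, wn k) - ∑ k ∈ Finset.univ.filter fun k => k < i, wn (σ k))

lemma pw_nonneg (hw : ∀ x, 0 < wn x) (σ : Equiv.Perm (Fin n)) : 0 ≤ pw wn σ := by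
  refine Finset.prod_nonneg fun i _ => div_nonneg (hw _).le ?_
  rw [← Equiv.sum_comp σ, sub_nonneg]
  exact Finset.sum_le_sum_of_subset_of_nonneg (Finset.subset_univ _) fun x _ _ => (hw _).le

lemma Ex_eq_perm (f : List (Fin n) → ℝ) :
    Ex wn n Finset.univ f = ∑ σ : Equiv.Perm (Fin n), pw wn σ * f (List.ofFn ⇑σ) := by
  rw [Ex_eq_sum]
  have : ∀ ω : Fin n → Fin n, Q wn Finset.univ n ω * f (List.ofFn ω) =
      if Function.Injective ω then
       (∏ i : Fin n, wn (ω i) / ((∑ k, wn k) - ∑ k ∈ Finset.univ.filter fun k => k < i, wn (ω k)))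
        * f (List.ofFn ω) else 0 := by
    intro ω
    unfold Q
    by_cases h : Function.Injective ω
    · rw [if_pos h, if_pos ⟨h, fun i => Finset.mem_univ _⟩]; rfl
    · rw [if_neg h, if_neg (fun h' => h h'.1), zero_mul]
  rw [Finset.sum_congr rfl fun ω _ => this ω, ← Finset.sum_filter]
  symm
  refine Finset.sum_bij (fun σ _ => ⇑σ) (fun σ _ => by simpa using σ.injective)
    (fun σ _ τ _ h => DFunLike.coe_injective h) (fun ω hω => ?_) (fun σ _ => rfl)
  have hi : Function.Injective ω := by simpa using hω
  exact ⟨Equiv.ofBijective ω (Finite.injective_iff_bijective.1 hi), Finset.mem_univ _, rfl⟩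

lemma sb_eq : sbMeasure n wn = ∑ σ : Equiv.Perm (Fin n),
    ENNReal.ofReal (pw wn σ) • Measure.dirac (⇑σ : Fin n → Fin n) := by
  rw [sbMeasure, Measure.sum_fintype]; rfl

lemma sb_integral (hw : ∀ x, 0 < wn x) (f : List (Fin n) → ℝ) :
    ∫ ω, f (List.ofFn ω) ∂sbMeasure n wn = Ex wn n Finset.univ f := by
  rw [sb_eq, integral_finsetSum_measure, Ex_eq_perm]
  · refine Finset.sum_congr rfl fun σ _ => ?_
    rw [integral_smul_measure, integral_dirac, ENNReal.toReal_ofReal (pw_nonneg hw σ)]; rfl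
  · intro σ _
    exact (Integrable.of_finite).smul_measure ENNReal.ofReal_ne_top

lemma sb_prob (hw : ∀ x, 0 < wn x) (P : List (Fin n) → Prop) :
    sbMeasure n wn {ω | P (List.ofFn ω)} =
      ENNReal.ofReal (Ex wn n Finset.univ (fun l => ind (P l))) := by
  have hS : MeasurableSet {ω : Fin n → Fin n | P (List.ofFn ω)} := (Set.toFinite _).measurableSet
  rw [sb_eq, Ex_eq_perm, ENNReal.ofReal_sum_of_nonneg
    (fun σ _ => mul_nonneg (pw_nonneg hw σ) (ind_nonneg _)), Measure.finsetSum_apply]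
  refine Finset.sum_congr rfl fun σ _ => ?_
  rw [Measure.smul_apply, Measure.dirac_apply' _ hS, smul_eq_mul,
    ENNReal.ofReal_mul (pw_nonneg hw σ)]
  congr 1
  by_cases h : P (List.ofFn ⇑σ) <;> simp [ind, h]

/-- partial sums -/
def PS (wn : Fin n → ℝ) (t : ℕ) (l : List (Fin n)) : ℝ := ((l.take t).map wn).sum

lemma sbW_range (ω : Fin n → Fin n) (t : ℕ) :
    ∑ k ∈ Finset.range (t + 1), sbW wn ω k = PS wn t (List.ofFn ω) := by
  induction t with
  | zero => simp [sbW, PS]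
  | succ t ih =>
    rw [Finset.sum_range_succ, ih]
    simp only [PS, List.take_add_one, List.map_append, List.sum_append]
    congr 1
    by_cases h : t < n
    · simp [sbW, h]
    · simp [sbW, h]

lemma sbW_Icc (ω : Fin n → Fin n) {i j : ℕ} (hij : i ≤ j) :
    ∑ k ∈ Finset.Icc i j, sbW wn ω k =
      PS wn j (List.ofFn ω) - PS wn (i - 1) (List.ofFn ω) := by
  have : Finset.Icc i j = Finset.Ico i (j + 1) := by ext z; simp only [Finset.mem_Icc, Finset.mem_Ico]; omega
  rw [this, Finset.sum_Ico_eq_sub _ (by omega), sbW_range]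
  congr 1
  cases i with
  | zero => simp [PS]
  | succ i => rw [sbW_range]; rfl

lemma bridge (hw : ∀ x, 0 < wn x) {m : ℕ} (hm : m ≤ n) (y : ℝ) :
    sbMeasure n wn {ω : Fin n → Fin n | ∃ i j : ℕ, i ≤ j ∧ j ≤ m ∧
            y ≤ |(∑ k ∈ Finset.Icc i j, sbW wn ω k) -
                ∫ ω', ∑ k ∈ Finset.Icc i j, sbW wn ω' k ∂sbMeasure n wn|} ≤
    ENNReal.ofReal (Ex wn m Finset.univ (fun l => ind (∃ j ≤ m,
      y / 2 ≤ |((l.take j).map wn).sum - F wn wn j Finset.univ|))) := by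
  have hF : ∀ t ≤ n, Ex wn n Finset.univ (PS wn t) = F wn wn t Finset.univ := by
    intro t ht
    obtain ⟨s, hs⟩ := Nat.exists_eq_add_of_le ht
    have := Ex_take' hw t s Finset.univ (by simp; omega) (fun l => (l.map wn).sum)
    rw [← hs] at this
    exact this
  have hI : ∀ i j, i ≤ j → j ≤ m → ∫ ω', ∑ k ∈ Finset.Icc i j, sbW wn ω' k ∂sbMeasure n wn =
      F wn wn j Finset.univ - F wn wn (i - 1) Finset.univ := by
    intro i j hij hj
    simp only [sbW_Icc _ hij]
    rw [sb_integral hw (fun l => PS wn j l - PS wn (i - 1) l), Ex_sub]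
    rw [← hF j (by omega), ← hF (i - 1) (by omega)]
  obtain ⟨s, hs⟩ := Nat.exists_eq_add_of_le hm
  have e := Ex_take' hw m s Finset.univ (by simp; omega) (fun l => ind (∃ j ≤ m,
      y / 2 ≤ |((l.take j).map wn).sum - F wn wn j Finset.univ|))
  rw [← hs] at e
  rw [← e, ← sb_prob hw (fun l => ∃ j ≤ m,
      y / 2 ≤ |(((l.take m).take j).map wn).sum - F wn wn j Finset.univ|)]
  refine measure_mono ?_
  rintro ω ⟨i, j, hij, hj, h⟩
  rw [hI i j hij hj, sbW_Icc _ hij] at h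
  simp only [Set.mem_ofPred_eq]
  by_contra hcon
  push Not at hcon
  have h1 := hcon j hj
  have h2 := hcon (i - 1) (by omega)
  rw [List.take_take, min_eq_left hj] at h1
  rw [List.take_take, min_eq_left (by omega : i - 1 ≤ m)] at h2
  simp only [PS] at h
  rw [abs_lt] at h1 h2
  rcases le_abs.1 h with h | h <;> linarith

end
end SB

namespace SB
noncomputable section

lemma W_sdiff {α : Type} [Fintype α] {w : α → ℝ} {R T : Finset α} (h : T ⊆ R) :
    W w (R \ T) + W w T = W w R := Finset.sum_sdiff h

/-- deterministic regularity of the weights at a fixed size -/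
structure Good {n : ℕ} (wn : Fin n → ℝ) (c K s M : ℝ) (m : ℕ) : Prop where
  hw : ∀ x, 0 < wn x
  hc : 0 < c
  hK : 0 < K
  hs : 0 < s
  hn : (n : ℝ) = s ^ 3
  hl : c * n / 2 ≤ ∑ x, wn x
  h2 : ∑ x, wn x ^ 2 ≤ 2 * c * n
  h3 : ∑ x, wn x ^ 3 ≤ K * n
  hM : ∀ x, wn x ≤ M
  hM0 : 0 ≤ M
  hMs : M + 8 ≤ s
  hm : (m : ℝ) + 1 ≤ c * n / 32

section good
variable {n : ℕ} {wn : Fin n → ℝ} {c K s M : ℝ} {m : ℕ}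

lemma Good.lam_pos (g : Good wn c K s M m) : 0 < c * n / 4 := by
  have := g.hc; have := g.hs; rw [g.hn]; positivity

lemma Good.H (g : Good wn c K s M m) : H wn (c * n / 4) Finset.univ (m + 1) := by
  intro T hT hcard
  have hsq : (∑ x ∈ T, wn x) ^ 2 ≤ (c * n / 4) ^ 2 := by
    have h1 := sq_sum_le_card_mul_sum_sq (s := T) (f := wn)
    have h2 : ∑ x ∈ T, wn x ^ 2 ≤ 2 * c * n :=
      (Finset.sum_le_sum_of_subset_of_nonneg hT fun x _ _ => sq_nonneg _).trans g.h2
    have h3 : (T.card : ℝ) ≤ c * n / 32 := by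
      have : (T.card : ℝ) ≤ m + 1 := by exact_mod_cast hcard
      linarith [g.hm]
    have h4 : 0 ≤ ∑ x ∈ T, wn x ^ 2 := Finset.sum_nonneg fun x _ => sq_nonneg _
    calc _ ≤ _ := h1
      _ ≤ (c * n / 32) * (2 * c * n) := by
        have := g.lam_pos
        exact mul_le_mul h3 h2 h4 (by linarith)
      _ = _ := by ring
  have h5 := abs_le_of_sq_le_sq hsq g.lam_pos.le
  have h6 := W_sdiff (w := wn) hT
  have h7 : W wn T = ∑ x ∈ T, wn x := rfl
  have h8 : W wn Finset.univ = ∑ x, wn x := rfl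
  have := g.hl
  linarith [le_abs_self (∑ x ∈ T, wn x)]

lemma Good.k1 (g : Good wn c K s M m) : ∑ x, wn x * wn x ≤ 8 * (c * n / 4) := by
  have := g.h2
  simp only [pow_two] at this
  linarith

lemma Good.k2 (g : Good wn c K s M m) : ∑ x, wn x * sq wn x ≤ (4 * K / c) * (c * n / 4) := by
  have := g.h3
  have e : ∀ x, wn x * sq wn x = wn x ^ 3 := fun x => by rw [sq]; ring
  simp only [e]
  have hc := g.hc.ne'
  have e2 : (4 * K / c) * (c * n / 4) = K * n := by field_simp
  linarith

lemma Good.v1 (g : Good wn c K s M m) :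
    2 * (∑ x, wn x * wn x ^ 2) / (c * n / 4) + 2 * (8 : ℝ) ^ 2 ≤ 2 * (4 * K / c) + 128 := by
  have h := g.k2
  have e : ∀ x, wn x * sq wn x = wn x * wn x ^ 2 := fun x => by rw [sq]; ring
  simp only [e] at h
  have : 2 * (∑ x, wn x * wn x ^ 2) / (c * n / 4) ≤ 2 * (4 * K / c) := by
    rw [div_le_iff₀ g.lam_pos]; linarith
  linarith

lemma Good.v2 (g : Good wn c K s M m) :
    2 * (∑ x, wn x * sq wn x ^ 2) / (c * n / 4) + 2 * (4 * K / c) ^ 2 ≤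
      2 * (M ^ 2 * (4 * K / c)) + 2 * (4 * K / c) ^ 2 := by
  have h := g.k2
  have h2 : ∑ x, wn x * sq wn x ^ 2 ≤ M ^ 2 * ∑ x, wn x * sq wn x := by
    rw [Finset.mul_sum]
    refine Finset.sum_le_sum fun x _ => ?_
    have h0 := (g.hw x).le
    have hM := g.hM x
    have : wn x ^ 2 ≤ M ^ 2 := by gcongr
    have : wn x * sq wn x ^ 2 = wn x ^ 2 * (wn x * sq wn x) := by rw [sq]; ring
    rw [this]
    have : 0 ≤ wn x * sq wn x := by rw [sq]; positivity
    gcongr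
  have : 2 * (∑ x, wn x * sq wn x ^ 2) / (c * n / 4) ≤ 2 * (M ^ 2 * (4 * K / c)) := by
    rw [div_le_iff₀ g.lam_pos]
    have := mul_le_mul_of_nonneg_left h (sq_nonneg M)
    linarith
  linarith

lemma expo {y t v s μ : ℝ} (hy : 0 < y) (ht : y / 8 ≤ t) (ht2 : t ≤ y) (hs : 0 < s) (hv : 0 ≤ v)
    (hm : 0 ≤ μ) : ∃ θ : ℝ, 0 ≤ θ ∧ θ * s ≤ 1 ∧
      -θ * t + μ * v * θ ^ 2 ≤ -(y ^ 2 / (y * s + μ)) / (256 * (v + 1)) := by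
  have ht0 : 0 < t := by linarith
  have hd : 0 < v * μ + s * t := by positivity
  refine ⟨t / (2 * (v * μ + s * t)), by positivity, ?_, ?_⟩
  · rw [div_mul_eq_mul_div, div_le_one (by positivity)]; nlinarith [mul_nonneg hv hm, mul_pos hs ht0]
  · have h1 : -(t / (2 * (v * μ + s * t))) * t + μ * v * (t / (2 * (v * μ + s * t))) ^ 2 ≤
        -(t ^ 2 / (4 * (v * μ + s * t))) := by
      have e : -(t / (2 * (v * μ + s * t))) * t + μ * v * (t / (2 * (v * μ + s * t))) ^ 2 +
        (t ^ 2 / (4 * (v * μ + s * t))) = - (s * t) * (t ^ 2 / (4 * (v * μ + s * t) ^ 2)) := by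
        field_simp; ring
      have : 0 ≤ (s * t) * (t ^ 2 / (4 * (v * μ + s * t) ^ 2)) := by positivity
      linarith
    refine h1.trans ?_
    rw [neg_div, neg_le_neg_iff, div_div]
    rw [div_le_div_iff₀ (by positivity) (by positivity)]
    have h2 : v * μ + s * t ≤ (y * s + μ) * (v + 1) := by
      have a1 : s * t ≤ s * y := by gcongr
      have a2 : 0 ≤ y * s * v := by positivity
      nlinarith
    have h3 : y ^ 2 ≤ 64 * t ^ 2 := by nlinarith
    calc y ^ 2 * (4 * (v * μ + s * t)) ≤ (64 * t ^ 2) * (4 * ((y * s + μ) * (v + 1))) := by gcongr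
      _ = _ := by ring

lemma grid (m N : ℕ) (hN : 0 < N) : ∃ G : Finset ℕ, (∀ g ∈ G, g ≤ m) ∧ m ∈ G ∧
    (∀ j ≤ m, ∃ g ∈ G, g ≤ j ∧ (j : ℝ) - g ≤ (m : ℝ) / N + 1) ∧
    (∀ j ≤ m, ∃ g ∈ G, j ≤ g ∧ (g : ℝ) - j ≤ (m : ℝ) / N + 1) ∧ G.card ≤ N + 2 := by
  set q := m / N + 1 with hq
  have hq0 : 0 < q := Nat.succ_pos _
  have hqm : m < N * q := by
    rw [hq]; have := Nat.lt_mul_div_succ m hN; simpa using this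
  have hqr : (q : ℝ) ≤ (m : ℝ) / N + 1 := by
    rw [hq]; push_cast; linarith [Nat.cast_div_le (α := ℝ) (m := m) (n := N)]
  set G : Finset ℕ := (Finset.range (N + 2)).image (fun k => min m (k * q)) with hG
  have hGm : ∀ g ∈ G, g ≤ m := by
    intro g hg
    obtain ⟨k, _, rfl⟩ := Finset.mem_image.1 hg
    exact min_le_left _ _
  have hk : ∀ j ≤ m, j / q ≤ N := fun j hj => by
    have : j / q < N := (Nat.div_lt_iff_lt_mul hq0).2 (by omega)
    omega
  have up : ∀ j ≤ m, ∃ g ∈ G, j ≤ g ∧ g ≤ j + q := by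
    intro j hj
    refine ⟨min m ((j / q + 1) * q), Finset.mem_image.2 ⟨j / q + 1, ?_, rfl⟩, ?_, ?_⟩
    · have := hk j hj
      rw [Finset.mem_range]; omega
    · refine le_min hj ?_
      have := Nat.lt_mul_div_succ j hq0
      rw [mul_comm]; exact this.le
    · refine (min_le_right _ _).trans ?_
      have := Nat.div_mul_le_self j q
      rw [add_mul]; omega
  refine ⟨G, hGm, ?_, ?_, ?_, ?_⟩
  · obtain ⟨g, hg, h1, _⟩ := up m le_rfl
    have := hGm g hg
    obtain rfl : g = m := by omega
    exact hg
  · intro j hj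
    have h1 := Nat.div_mul_le_self j q
    refine ⟨j / q * q, Finset.mem_image.2 ⟨j / q, ?_, ?_⟩, h1, ?_⟩
    · have := hk j hj
      rw [Finset.mem_range]; omega
    · exact min_eq_right (h1.trans hj)
    · have h2 : j ≤ j / q * q + q := by
        have := Nat.lt_mul_div_succ j hq0
        rw [mul_add, mul_comm, mul_one] at this; omega
      have h3 : (j : ℝ) ≤ ((j / q * q : ℕ) : ℝ) + q := by exact_mod_cast h2
      linarith
  · intro j hj
    obtain ⟨g, hg, h1, h2⟩ := up j hj
    refine ⟨g, hg, h1, ?_⟩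
    have h3 : (g : ℝ) ≤ (j : ℝ) + q := by exact_mod_cast h2
    linarith
  · exact Finset.card_image_le.trans (by simp)

lemma Good.bound1 (g : Good wn c K s M m) {y c1 D : ℝ} {N : ℕ} (hN : 0 < N) (hy : 0 < y)
    (hc1 : y ≤ c1 * m) (hc10 : 0 ≤ c1) (hD : (m : ℝ) ^ 2 ≤ D * y * s ^ 3)
    (hNl : 64 * (64 + 8 * c1 + 4 * K / c) * D / c ≤ N)
    (hyl : 64 * (64 + 8 * c1 + 4 * K / c) / c ≤ y) (hmn : (m : ℝ) ≤ n) :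
    Ex wn m Finset.univ (fun l => ind (∃ j ≤ m,
      y / 2 ≤ |((l.take j).map wn).sum - F wn wn j Finset.univ|)) ≤
      (2 * N + 6) * Real.exp (-(y ^ 2 / (y * s + m)) / (256 * (2 * (4 * K / c) + 128 + 1))) := by
  have hc := g.hc
  have hK := g.hK
  have hs := g.hs
  have hk2 : 0 ≤ 4 * K / c := by positivity
  obtain ⟨θ, hθ0, hθ, hexp⟩ := expo (t := y / 8) (v := 2 * (4 * K / c) + 128) (μ := m) hy le_rfl
    (by linarith) hs (by positivity) (by positivity)
  obtain ⟨G, hG, hmG, hG1, hG2, hcard⟩ := grid m N hN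
  have hNr : (0 : ℝ) < N := by exact_mod_cast hN
  have herr : 3 * (y / 8) + ((m : ℝ) / N + 1) *
      ((8 * (m * 8 + y / 8) + (4 * K / c) * m) / (c * n / 4)) ≤ y / 2 := by
    set C4 := 64 + 8 * c1 + 4 * K / c with hC4
    have hC40 : 0 < C4 := by positivity
    have hn0 : (0 : ℝ) < n := by rw [g.hn]; positivity
    have e1 : 8 * ((m : ℝ) * 8 + y / 8) + (4 * K / c) * m ≤ C4 * m := by
      rw [hC4]; nlinarith [mul_nonneg hc10 (Nat.cast_nonneg (α := ℝ) m)]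
    have e2 : ((m : ℝ) / N + 1) * ((8 * (m * 8 + y / 8) + (4 * K / c) * m) / (c * n / 4)) ≤
        ((m : ℝ) / N + 1) * (C4 * m / (c * n / 4)) := by gcongr
    have e3 : ((m : ℝ) / N + 1) * (C4 * m / (c * n / 4)) =
        4 * C4 / (c * N) * ((m : ℝ) ^ 2 / n) + 4 * C4 / c * (m / n) := by
      field_simp
    have e4 : (m : ℝ) ^ 2 / n ≤ D * y := by
      rw [div_le_iff₀ hn0, g.hn]; exact hD
    have e5 : (m : ℝ) / n ≤ 1 := by rw [div_le_one hn0]; exact hmn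
    have e6 : 4 * C4 / (c * N) * ((m : ℝ) ^ 2 / n) ≤ 4 * C4 / (c * N) * (D * y) := by gcongr
    have e7 : 4 * C4 / c * ((m : ℝ) / n) ≤ 4 * C4 / c * 1 := by gcongr
    have e8 : 4 * C4 / (c * N) * (D * y) ≤ y / 16 := by
      have : 4 * C4 / (c * N) * (D * y) = (64 * C4 * D / c) / N * (y / 16) := by
        field_simp; ring
      rw [this]
      have h1 : (64 * C4 * D / c) / N ≤ 1 := by rw [div_le_one hNr]; exact hNl
      nlinarith
    have e9 : 4 * C4 / c * 1 ≤ y / 16 := by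
      have : 4 * C4 / c * 1 = 64 * C4 / c / 16 := by ring
      rw [this]; linarith
    linarith
  have := case1 g.hw g.lam_pos g.k1 (by norm_num) g.k2 hk2 g.H (B := s) (θ := θ)
    (fun x => by linarith [g.hM x, g.hMs]) hθ hθ0 g.v1 G hG hmG hG1 hG2 (by positivity) herr
  refine this.trans ?_
  have hcr : (G.card : ℝ) ≤ N + 2 := by exact_mod_cast hcard
  exact mul_le_mul (by linarith) (Real.exp_le_exp.2 hexp) (Real.exp_pos _).le (by positivity)

lemma Good.bound2 (g : Good wn c K s M m) {y C' ε η : ℝ} (hy : 0 < y) (hsy : s ≤ y)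
    (hC' : (m : ℝ) ≤ C' * s ^ 2) (hC0 : 0 < C') (hε : 0 < ε)
    (hη : 2 * (M ^ 2 * (4 * K / c)) + 2 * (4 * K / c) ^ 2 + 8 * (2 * (4 * K / c) + 128) ≤ η * s ^ 2) :
    Ex wn m Finset.univ (fun l => ind (∃ j ≤ m,
      y / 2 ≤ |((l.take j).map wn).sum - F wn wn j Finset.univ|)) ≤
      2 * Real.exp (-(y ^ 2 / (y * s + m)) / (256 * (2 * (4 * K / c) + 128 + 1))) +
      (32 * C' / c) * (9 * ε + 4 * C' * η / ε) := by
  have hc := g.hc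
  have hK := g.hK
  have hs := g.hs
  have hM0 := g.hM0
  have hk2 : 0 ≤ 4 * K / c := by positivity
  obtain ⟨θ, hθ0, hθ, hexp⟩ := expo (t := y / 4) (v := 2 * (4 * K / c) + 128) (μ := m) hy
    (by linarith) (by linarith) hs (by positivity) (by positivity)
  have := case2 g.hw g.lam_pos g.k1 (by norm_num) g.k2 hk2 g.H (B := s) (B₂ := M ^ 2 + 4 * K / c)
    (θ := θ) (τ := ε * s ^ 2) (t := y / 4)
    (fun x => by linarith [g.hM x, g.hMs]) hs.le hθ hθ0
    (fun x => by
      have h0 := (g.hw x).le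
      have hM := g.hM x
      rw [sq]; nlinarith) (by positivity) (by positivity) (by positivity)
    g.v1 (by positivity) g.v2 (by positivity)
  have e0 : 2 * (y / 4) = y / 2 := by ring
  rw [e0] at this
  refine this.trans ?_
  set v := 2 * (4 * K / c) + 128 with hv
  set v₂ := 2 * (M ^ 2 * (4 * K / c)) + 2 * (4 * K / c) ^ 2 with hv₂
  have hv0 : 0 ≤ v := by positivity
  have hv20 : 0 ≤ v₂ := by positivity
  have hmy : (m : ℝ) / y ≤ C' * s := by
    rw [div_le_iff₀ hy]
    nlinarith [mul_pos hC0 hs]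
  have hn0 : (0 : ℝ) < n := by rw [g.hn]; positivity
  refine add_le_add ?_ ?_
  · gcongr
  · have e1 : (1 / (y / 4)) * ((m : ℝ) * (2 * ((ε * s ^ 2 + 4 * m * v₂ / (ε * s ^ 2)) +
        8 * (ε * s ^ 2 + 4 * m * v / (ε * s ^ 2))) / (c * n / 4))) =
        (32 / (c * s ^ 3)) * ((m : ℝ) / y) * (9 * ε * s ^ 2 +
          4 / (ε * s ^ 2) * (m * (v₂ + 8 * v))) := by
      rw [g.hn]; field_simp; ring
    rw [e1]
    have hη' : v₂ + 8 * v ≤ η * s ^ 2 := hη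
    calc _ ≤ (32 / (c * s ^ 3)) * (C' * s) * (9 * ε * s ^ 2 +
          4 / (ε * s ^ 2) * ((C' * s ^ 2) * (η * s ^ 2))) := by gcongr
      _ = _ := by field_simp
end good

/-- in the small-deviation regime both parameters are controlled -/
lemma small_regime {y s μ D E : ℝ} (hy : 0 < y) (hs : 0 < s) (hD : 0 ≤ D) (hE : 0 ≤ E)
    (h1 : y ^ 2 ≤ E * (y * s + μ)) (h2 : μ ^ 2 ≤ D * y * s ^ 3) :
    μ ≤ (1 + D * (1 + 2 * E + 4 * E ^ 2 * D)) * s ^ 2 := by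
  set C := 1 + 2 * E + 4 * E ^ 2 * D with hC
  have hE2 : 0 ≤ 4 * E ^ 2 * D := by positivity
  have hC1 : 1 ≤ C := by linarith
  have hyC : y ≤ C * s := by
    by_cases hm : μ ≤ y * s
    · have : y * y ≤ y * (2 * E * s) := by nlinarith
      have := le_of_mul_le_mul_left this hy
      nlinarith
    · push Not at hm
      have a1 : y ^ 2 ≤ 2 * E * μ := by nlinarith
      have a2 : (y ^ 2) ^ 2 ≤ (2 * E * μ) ^ 2 := by gcongr
      have a3 : (2 * E * μ) ^ 2 ≤ 4 * E ^ 2 * (D * y * s ^ 3) := by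
        have : (2 * E * μ) ^ 2 = 4 * E ^ 2 * μ ^ 2 := by ring
        rw [this]; gcongr
      have a4 : y * y ^ 3 ≤ y * (4 * E ^ 2 * D * s ^ 3) := by nlinarith
      have a5 := le_of_mul_le_mul_left a4 hy
      have a6 : 4 * E ^ 2 * D ≤ C ^ 3 := by
        have : C ≤ C ^ 3 := le_self_pow₀ hC1 (by norm_num)
        linarith
      have a7 : y ^ 3 ≤ (C * s) ^ 3 := by
        rw [mul_pow]; exact a5.trans (by gcongr)
      exact le_of_pow_le_pow_left₀ (by norm_num) (by positivity) a7
  have b1 : μ ^ 2 ≤ D * (C * s) * s ^ 3 := h2.trans (by gcongr)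
  have hDC : 0 ≤ D * C := by positivity
  refine le_of_pow_le_pow_left₀ (n := 2) (by norm_num) (by positivity) ?_
  calc μ ^ 2 ≤ D * C * s ^ 4 := by linarith
    _ ≤ (1 + D * C) ^ 2 * s ^ 4 := by gcongr; nlinarith
    _ = _ := by ring

end
end SB

namespace SB

lemma mean_pos {μ : Measure ℝ} [IsProbabilityMeasure μ] (hpos : ∀ᵐ x ∂μ, 0 < x)
    (h3 : Integrable (fun x => x ^ 3) μ) : 0 < ∫ x, x ∂μ := by
  have hi : Integrable (fun x : ℝ => x) μ := by
    refine Integrable.mono' (h3.add (integrable_const (1 : ℝ))) (by fun_prop) ?_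
    filter_upwards [hpos] with x hx
    rw [Real.norm_eq_abs, abs_of_pos hx]
    simp only [Pi.add_apply]
    nlinarith [sq_nonneg (x - 1)]
  rw [integral_pos_iff_support_of_nonneg_ae (by filter_upwards [hpos] with x hx using hx.le) hi]
  have : μ (Function.support fun x : ℝ => x) = 1 := by
    rw [prob_compl_eq_zero_iff₀ ?_ |>.symm]
    · refine measure_mono_null ?_ (ae_iff.1 hpos)
      intro x hx
      simp only [Set.mem_compl_iff, Function.mem_support, not_not] at hx
      simp [hx]
    · exact (measurableSet_support measurable_id).nullMeasurableSet
  rw [this]; exact one_pos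

lemma pow_two_thirds : (fun n : ℕ => (n : ℝ) ^ ((2 : ℝ) / 3)) =O[atTop] fun n : ℕ => (n : ℝ) := by
  refine IsBigO.of_bound 1 ?_
  filter_upwards [eventually_ge_atTop 1] with n hn
  have h1 : (1 : ℝ) ≤ n := by exact_mod_cast hn
  rw [Real.norm_of_nonneg (by positivity), Real.norm_of_nonneg (by positivity), one_mul]
  calc (n : ℝ) ^ ((2 : ℝ) / 3) ≤ (n : ℝ) ^ (1 : ℝ) :=
        Real.rpow_le_rpow_of_exponent_le h1 (by norm_num)
    _ = n := Real.rpow_one _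

lemma exp_cond {y P s μ : ℝ} (hy : 0 < y) (hs : 0 < s) (hμ : 0 ≤ μ) (hP : P = y * s + μ)
    (h : Real.exp (-y ^ 2 / (1 * P)) < 1 / 4) : s ≤ y := by
  have hP0 : 0 < P := by rw [hP]; positivity
  have h1 : 1 ≤ y ^ 2 / P := by
    by_contra hcon
    push Not at hcon
    have h2 : Real.exp (-1) < Real.exp (-y ^ 2 / (1 * P)) := by
      rw [Real.exp_lt_exp, one_mul, neg_div]; linarith
    have h3 := Real.exp_one_lt_d9
    rw [Real.exp_neg] at h2
    have h4 : (Real.exp 1)⁻¹ < 1 / 4 := h2.trans h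
    rw [inv_lt_comm₀ (Real.exp_pos _) (by norm_num)] at h4
    norm_num at h4
    linarith
  rw [le_div_iff₀ hP0, hP] at h1
  have : y * s ≤ y * y := by nlinarith
  exact le_of_mul_le_mul_left this hy

lemma final_mono {A0 A C E : ℝ} (hA0 : 0 < A0) (hA : A = 2 * A0 + 3) (hC : C ≤ 3)
    (hE : 0 ≤ E) : C * Real.exp (-E / (2 * A0)) ≤ A * Real.exp (-E / A) := by
  have h1 : Real.exp (-E / (2 * A0)) ≤ Real.exp (-E / A) := by
    rw [Real.exp_le_exp, neg_div, neg_div, neg_le_neg_iff]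
    gcongr
    linarith
  have := Real.exp_pos (-E / (2 * A0))
  have := Real.exp_pos (-E / A)
  nlinarith

end SB

set_option maxHeartbeats 2000000
/-- Theorem of the paper: concentration of the size-biased sums
sampled without replacement, uniformly over `0 ≤ i ≤ j ≤ m`. -/
theorem size_biased_sum_concentration
    (w : ∀ n : ℕ, Fin n → ℝ) (μ : Measure ℝ) (hC : CondC w μ) :
    ∃ Abar > (0 : ℝ), ∃ A > (0 : ℝ), ∀ m : ℕ → ℕ, ∀ y : ℕ → ℝ,
      Cond2 w Abar (fun n => (m n : ℝ)) y →
      ∀ᶠ n : ℕ in atTop,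
        sbMeasure n (w n)
          {ω : Fin n → Fin n | ∃ i j : ℕ, i ≤ j ∧ j ≤ m n ∧
            y n ≤ |(∑ k ∈ Finset.Icc i j, sbW (w n) ω k) -
                ∫ ω', ∑ k ∈ Finset.Icc i j, sbW (w n) ω' k ∂sbMeasure n (w n)|}
        ≤ ENNReal.ofReal
            (A * Real.exp (-(y n) ^ 2 / (A * (y n * (n : ℝ) ^ ((1 : ℝ) / 3) + (m n : ℝ))))) := by
  have := hC.isProb
  have hc : 0 < ∫ x, x ∂μ := SB.mean_pos hC.pos hC.int3
  have hell := hC.ell_asymp.trans_isBigO SB.pow_two_thirds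
  have hsq := hC.sq_asymp.trans_isBigO SB.pow_two_thirds
  have hcube := hC.cube_asymp
  rw [hC.moment_eq] at hsq
  have hc3 : 0 ≤ ∫ x, x ^ 3 ∂μ := integral_nonneg_of_ae (by
    filter_upwards [hC.pos] with x hx
    exact pow_nonneg hx.le 3)
  set c := ∫ x, x ∂μ with hcd
  set c3 := ∫ x, x ^ 3 ∂μ with hc3d
  set K := c3 + 1 with hKd
  have hK : 0 < K := by linarith
  set k2 := 4 * K / c with hk2d
  have hk2 : 0 < k2 := by positivity
  set A0 : ℝ := 256 * (2 * k2 + 128 + 1) with hA0d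
  have hA0 : 0 < A0 := by positivity
  refine ⟨1, one_pos, 2 * A0 + 3, by positivity, ?_⟩
  intro m y h2
  obtain ⟨c1, hc1, hb1⟩ := h2.b_bigO.exists_pos
  obtain ⟨c4, hc4, hb4⟩ := h2.a_sq_bigO.exists_pos
  set D := c4 * (2 * c) with hD
  have hD0 : 0 < D := by positivity
  set C4 := 64 + 8 * c1 + 4 * K / c with hC4
  set N := Nat.ceil (64 * C4 * D / c) + 1 with hNd
  have hN : 0 < N := Nat.succ_pos _
  have hNl : 64 * C4 * D / c ≤ N := by
    rw [hNd]; push_cast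
    linarith [Nat.le_ceil (64 * C4 * D / c)]
  set Es := 2 * A0 * Real.log (2 * N + 6) with hEs
  have hEs0 : 0 ≤ Es := by
    have : 0 ≤ Real.log (2 * (N : ℝ) + 6) := Real.log_nonneg (by
      have : (0 : ℝ) ≤ N := by positivity
      linarith)
    positivity
  set C' := 1 + D * (1 + 2 * Es + 4 * Es ^ 2 * D) with hC'
  have hC'0 : 0 < C' := by positivity
  set ρ := Real.exp (-Es / A0) with hρ
  have hρ0 : 0 < ρ := Real.exp_pos _
  set ε := ρ * c / (576 * C') with hεd
  have hε : 0 < ε := by positivity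
  set η := ρ * c * ε / (256 * C' ^ 2) with hηd
  have hη : 0 < η := by positivity
  have hsmall : (32 * C' / c) * (9 * ε + 4 * C' * η / ε) ≤ ρ := by
    have e1 : (32 * C' / c) * (9 * ε) = ρ / 2 := by rw [hεd]; field_simp; ring
    have e2 : (32 * C' / c) * (4 * C' * η / ε) = ρ / 2 := by rw [hηd]; field_simp; ring
    rw [mul_add, e1, e2]; linarith
  set δ := min (1 / 2) (η / (4 * k2)) with hδd
  have hδ : 0 < δ := lt_min (by norm_num) (by positivity)
  have hs_top : Tendsto (fun n : ℕ => (n : ℝ) ^ ((1 : ℝ) / 3)) atTop atTop :=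
    (tendsto_rpow_atTop (by norm_num)).comp tendsto_natCast_atTop_atTop
  have hn_top : Tendsto (fun n : ℕ => (n : ℝ)) atTop atTop := tendsto_natCast_atTop_atTop
  filter_upwards [hell.bound (show 0 < c / 2 by positivity), hsq.bound hc,
    hcube.bound one_pos, hC.max_asymp.bound hδ, h2.exp_lt, hb1.bound, hb4.bound,
    h2.b_top.eventually_gt_atTop 0, h2.b_top.eventually_ge_atTop (64 * C4 / c),
    h2.a_lito.bound (show 0 < c / 64 by positivity), h2.a_lito.bound one_pos,
    hn_top.eventually_ge_atTop (64 / c), eventually_ge_atTop 1,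
    hs_top.eventually_ge_atTop 16, hs_top.eventually_ge_atTop
      (2 / η * (2 * k2 ^ 2 + 8 * (2 * k2 + 128)))] with n a1 a2 a3 a4 a5 a6 a7 a8 a9 a10 a11 a12
      a13 a14 a15
  set s := (n : ℝ) ^ ((1 : ℝ) / 3) with hsd
  have hn0 : (0 : ℝ) < n := by exact_mod_cast a13
  have hn1 : (1 : ℝ) ≤ n := by exact_mod_cast a13
  have hs : 0 < s := by positivity
  have hns : (n : ℝ) = s ^ 3 := by
    rw [hsd, ← Real.rpow_natCast, ← Real.rpow_mul hn0.le]; norm_num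
  have hsy : s ≤ y n := SB.exp_cond a8 hs (Nat.cast_nonneg (m n)) rfl a5
  simp only [Real.norm_eq_abs, Nat.abs_cast, abs_one, mul_one, one_mul] at a1 a2 a3 a4 a6 a7 a10 a11
  rw [abs_of_pos hs] at a4
  rw [abs_of_pos a8] at a6
  have b1 := abs_le.1 a1
  have hellpos : 0 < ell w n := by linarith [b1.1, mul_pos hc hn0]
  rw [abs_of_nonneg (sq_nonneg _), abs_of_pos (mul_pos a8 hellpos)] at a7
  have hw := hC.w_pos n
  have hM : ∀ x, w n x ≤ ⨆ i : Fin n, w n i := fun x => le_ciSup (Set.finite_range _).bddAbove x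
  have hM0 : 0 ≤ ⨆ i : Fin n, w n i := Real.iSup_nonneg fun i => (hw i).le
  rw [abs_of_nonneg hM0] at a4
  set M := ⨆ i : Fin n, w n i with hMd
  have hδ1 : δ ≤ 1 / 2 := min_le_left _ _
  have hδ2 : δ ≤ η / (4 * k2) := min_le_right _ _
  have g : SB.Good (w n) c K s M (m n) :=
    { hw := hw
      hc := hc
      hK := hK
      hs := hs
      hn := hns
      hl := by
        have : ell w n = ∑ x, w n x := rfl
        linarith [b1.1]
      h2 := by linarith [(abs_le.1 a2).2]
      h3 := by rw [hKd]; linarith [(abs_le.1 a3).2]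
      hM := hM
      hM0 := hM0
      hMs := by linarith [mul_le_mul_of_nonneg_right hδ1 hs.le]
      hm := by
        have : 1 ≤ c / 64 * n := by
          rw [div_le_iff₀ hc] at a12; linarith
        linarith }
  have hmn : m n ≤ n := by exact_mod_cast a11
  have hDm : (m n : ℝ) ^ 2 ≤ D * y n * s ^ 3 := by
    rw [← hns, hD]
    have : ell w n ≤ 2 * c * n := by linarith [b1.2, mul_pos hc hn0]
    calc (m n : ℝ) ^ 2 ≤ c4 * (y n * ell w n) := a7
      _ ≤ c4 * (y n * (2 * c * n)) := by gcongr
      _ = _ := by ring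
  refine (SB.bridge hw hmn (y n)).trans (ENNReal.ofReal_le_ofReal ?_)
  have hP : 0 < y n * s + m n := by positivity
  set E := (y n) ^ 2 / (y n * s + m n) with hE
  have hE0 : 0 ≤ E := by positivity
  have etarget : -(y n) ^ 2 / ((2 * A0 + 3) * (y n * s + m n)) = -E / (2 * A0 + 3) := by
    rw [hE]; field_simp
  rw [etarget]
  by_cases hcase : Es ≤ E
  · have hb := g.bound1 hN a8 a6 hc1.le hDm hNl a9 a11
    refine hb.trans ?_
    refine le_trans ?_ (SB.final_mono (C := 1) hA0 rfl (by norm_num) hE0)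
    have h6 : (0 : ℝ) < 2 * N + 6 := by positivity
    have e1 : (2 * (N : ℝ) + 6) ≤ Real.exp (E / (2 * A0)) := by
      rw [← Real.log_le_iff_le_exp h6, le_div_iff₀ (by positivity)]
      linarith
    calc (2 * (N : ℝ) + 6) * Real.exp (-E / A0) ≤ Real.exp (E / (2 * A0)) * Real.exp (-E / A0) := by
          gcongr
      _ = 1 * Real.exp (-E / (2 * A0)) := by
          rw [← Real.exp_add, one_mul]; congr 1; field_simp; ring
  · push Not at hcase
    have hreg : (m n : ℝ) ≤ C' * s ^ 2 := by
      refine SB.small_regime a8 hs hD0.le hEs0 ?_ hDm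
      rw [hE, div_lt_iff₀ hP] at hcase
      exact hcase.le
    have hη' : 2 * (M ^ 2 * (4 * K / c)) + 2 * (4 * K / c) ^ 2 + 8 * (2 * (4 * K / c) + 128) ≤
        η * s ^ 2 := by
      rw [← hk2d]
      have f1 : M ^ 2 ≤ δ * s ^ 2 := by
        calc M ^ 2 ≤ (δ * s) ^ 2 := by gcongr
          _ = δ * (δ * s ^ 2) := by ring
          _ ≤ 1 * (δ * s ^ 2) := by gcongr; linarith
          _ = _ := one_mul _
      have f2 : M ^ 2 * k2 ≤ η / 4 * s ^ 2 := by
        calc M ^ 2 * k2 ≤ (η / (4 * k2) * s ^ 2) * k2 := by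
              gcongr; exact f1.trans (by gcongr)
          _ = _ := by field_simp
      have f3 : 2 * k2 ^ 2 + 8 * (2 * k2 + 128) ≤ η / 2 * s := by
        have := mul_le_mul_of_nonneg_left a15 (show 0 ≤ η / 2 by positivity)
        calc _ = η / 2 * (2 / η * (2 * k2 ^ 2 + 8 * (2 * k2 + 128))) := by field_simp
          _ ≤ _ := this
      have f4 : η / 2 * s ≤ η / 2 * s ^ 2 := by gcongr; exact le_self_pow₀ (by linarith) (by norm_num)
      linarith
    have hb := g.bound2 a8 hsy hreg hC'0 hε hη'
    refine hb.trans ?_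
    refine le_trans ?_ (SB.final_mono (C := 3) hA0 rfl le_rfl hE0)
    have g1 : Real.exp (-E / A0) ≤ Real.exp (-E / (2 * A0)) := by
      rw [Real.exp_le_exp, neg_div, neg_div, neg_le_neg_iff]
      gcongr; linarith
    have g2 : ρ ≤ Real.exp (-E / A0) := by
      rw [hρ, Real.exp_le_exp, neg_div, neg_div, neg_le_neg_iff]
      gcongr
    have g3 : (32 * C' / c) * (9 * ε + 4 * C' * η / ε) ≤ Real.exp (-E / (2 * A0)) := by linarith
    change 2 * Real.exp (-E / A0) + _ ≤ _
    linarith
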